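/- Let Φ : ∂^c(A∗B) → ∂_*(A∗B) be the map from the combinatorial Morse boundary to the Morse boundary of the free product, sending a combinatorial Morse geodesic to the class of the concatenated geodesic ray. Then Φ is a bijection. -/

import Mathlib

open Set

/-- A Morse gauge. -/
abbrev MorseGauge := ℝ → ℝ → ℝ

/-- The constant `δ_M` associated to a Morse gauge `M`. -/
noncomputable def deltaM (M : MorseGauge) : ℝ :=
  max (4 * M 1 (2 * M 5 0) + 2 * M 5 0) (8 * M 3 0)

/-- A list of letters from `S ∪ S⁻¹`. -/
def IsWordOver {G : Type*} [Group G] (S : Set G) (l : List G) : Prop :=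
  ∀ x ∈ l, x ∈ S ∨ x⁻¹ ∈ S

/-- The word metric on `G` associated to the generating set `S`. -/
noncomputable def wordDist {G : Type*} [Group G] (S : Set G) (x y : G) : ℝ :=
  sInf {r : ℝ | ∃ l : List G, IsWordOver S l ∧ l.prod = x⁻¹ * y ∧ r = l.length}

section NatPaths

variable {G : Type*}

/-- A discrete `(L,e)`-quasi-geodesic (with respect to the distance function `d`),
parametrised over a set of naturals. -/
def IsQGOnN (d : G → G → ℝ) (L e : ℝ) (γ : ℕ → G) (s : Set ℕ) : Prop :=
  ∀ i ∈ s, ∀ j ∈ s,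
    (1 / L) * |(i : ℝ) - (j : ℝ)| - e ≤ d (γ i) (γ j) ∧
      d (γ i) (γ j) ≤ L * |(i : ℝ) - (j : ℝ)| + e

/-- A discrete geodesic with respect to `d`. -/
def IsGeodesicOnN (d : G → G → ℝ) (γ : ℕ → G) (s : Set ℕ) : Prop :=
  ∀ i ∈ s, ∀ j ∈ s, d (γ i) (γ j) = |(i : ℝ) - (j : ℝ)|

/-- The (discrete) path `γ` on `s` is `M`-Morse with respect to `d`. -/
def IsMorseOnN (d : G → G → ℝ) (M : MorseGauge) (γ : ℕ → G) (s : Set ℕ) : Prop :=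
  ∀ L e, 1 ≤ L → 0 ≤ e → ∀ (η : ℕ → G) (a b : ℕ), a ≤ b →
    IsQGOnN d L e η (Icc a b) → η a ∈ γ '' s → η b ∈ γ '' s →
    ∀ i ∈ Icc a b, ∃ j ∈ s, d (η i) (γ j) ≤ M L e

/-- A Morse geodesic ray from the basepoint `o`. -/
def IsMorseRayN (d : G → G → ℝ) (o : G) (γ : ℕ → G) : Prop :=
  γ 0 = o ∧ IsGeodesicOnN d γ univ ∧ ∃ M, IsMorseOnN d M γ univ

/-- The type of Morse geodesic rays from `o`. -/
def MRayN (d : G → G → ℝ) (o : G) := {γ : ℕ → G // IsMorseRayN d o γ}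

/-- The Morse boundary: Morse rays from `o` up to bounded (Hausdorff) distance. -/
def MorseBoundaryN (d : G → G → ℝ) (o : G) :=
  Quot (fun γ γ' : MRayN d o => ∃ C, ∀ i, d (γ.1 i) (γ'.1 i) ≤ C)

/-- `z` is an `M`-Morse direction: it admits an `M`-Morse realization. -/
def MorseDirN (d : G → G → ℝ) (o : G) (M : MorseGauge) (z : MorseBoundaryN d o) : Prop :=
  ∃ γ : MRayN d o, IsMorseOnN d M γ.1 univ ∧ Quot.mk _ γ = z

/-- The `M`-Morse stratum `∂^M` of the Morse boundary. -/
def stratumN (d : G → G → ℝ) (o : G) (M : MorseGauge) : Set (MorseBoundaryN d o) :=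
  {z | MorseDirN d o M z}

/-- The neighbourhood `U_{M,n}(z)` in the `M`-Morse stratum: classes of `M`-Morse rays
that `δ_M`-fellow-travel every `M`-Morse realization of `z` up to time `n`. -/
def UN (d : G → G → ℝ) (o : G) (M : MorseGauge) (n : ℕ) (z : MorseBoundaryN d o) :
    Set (MorseBoundaryN d o) :=
  {w | ∃ η : MRayN d o, Quot.mk _ η = w ∧ IsMorseOnN d M η.1 univ ∧
        ∀ ξ : MRayN d o, IsMorseOnN d M ξ.1 univ → Quot.mk _ ξ = z →
          ∀ t ≤ n, d (η.1 t) (ξ.1 t) < deltaM M}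

/-- The direct-limit topology on the Morse boundary: a set is open iff its intersection
with every stratum is open for the neighbourhood-basis topology of that stratum. -/
def morseTopologyN (d : G → G → ℝ) (o : G) : TopologicalSpace (MorseBoundaryN d o) where
  IsOpen O := ∀ M z, z ∈ O → MorseDirN d o M z → ∃ n, UN d o M n z ∩ stratumN d o M ⊆ O
  isOpen_univ := by intro M z _ _; exact ⟨0, fun w _ => trivial⟩
  isOpen_inter := by
    intro O₁ O₂ h₁ h₂ M z hz hM
    obtain ⟨n₁, hn₁⟩ := h₁ M z hz.1 hM
    obtain ⟨n₂, hn₂⟩ := h₂ M z hz.2 hM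
    refine ⟨max n₁ n₂, fun w hw => ⟨hn₁ ⟨?_, hw.2⟩, hn₂ ⟨?_, hw.2⟩⟩⟩
    · obtain ⟨η, h1, h2, h3⟩ := hw.1
      exact ⟨η, h1, h2, fun ξ a b t ht => h3 ξ a b t (ht.trans (le_max_left _ _))⟩
    · obtain ⟨η, h1, h2, h3⟩ := hw.1
      exact ⟨η, h1, h2, fun ξ a b t ht => h3 ξ a b t (ht.trans (le_max_right _ _))⟩
  isOpen_sUnion := by
    intro S hS M z hz hM
    obtain ⟨O, hO, hzO⟩ := hz
    obtain ⟨n, hn⟩ := hS O hO M z hzO hM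
    exact ⟨n, fun w hw => ⟨O, hO, hn hw⟩⟩

/-- `x ∈ G` is an `M`-Morse point: some geodesic from `o` to `x` is `M`-Morse. -/
def MorsePtN (d : G → G → ℝ) (o : G) (M : MorseGauge) (x : G) : Prop :=
  ∃ (n : ℕ) (γ : ℕ → G), γ 0 = o ∧ γ n = x ∧
    IsGeodesicOnN d γ (Iic n) ∧ IsMorseOnN d M γ (Iic n)

/-- Membership of the point `x` in the filled neighbourhood `Û_{M,k}(z)`. -/
def InFilledPtN (d : G → G → ℝ) (o : G) (M : MorseGauge) (k : ℕ)
    (z : MorseBoundaryN d o) (x : G) : Prop :=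
  ∃ (n : ℕ) (γ : ℕ → G), k ≤ n ∧ γ 0 = o ∧ γ n = x ∧
    IsGeodesicOnN d γ (Iic n) ∧ IsMorseOnN d M γ (Iic n) ∧
    ∀ ξ : MRayN d o, IsMorseOnN d M ξ.1 univ → Quot.mk _ ξ = z →
      ∀ t ≤ k, d (γ t) (ξ.1 t) < deltaM M

end NatPaths
open Monoid

section FreeProduct

variable {A B : Type*} [Group A] [Group B]

/-- A syllable viewed inside the free product `A ∗ B`. -/
def sylElem : A ⊕ B → Monoid.Coprod A B
  | Sum.inl a => Monoid.Coprod.inl a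
  | Sum.inr b => Monoid.Coprod.inr b

/-- The generating set of `A ∗ B` induced by `S_A` and `S_B`. -/
def fpGens (SA : Set A) (SB : Set B) : Set (Monoid.Coprod A B) :=
  (fun a : A => (Monoid.Coprod.inl a : Monoid.Coprod A B)) '' SA ∪
    (fun b : B => (Monoid.Coprod.inr b : Monoid.Coprod A B)) '' SB

/-- A syllable is a Morse point of its factor. -/
def MorsePtSum (dA : A → A → ℝ) (dB : B → B → ℝ) (M : MorseGauge) : A ⊕ B → Prop
  | Sum.inl a => MorsePtN dA 1 M a
  | Sum.inr b => MorsePtN dB 1 M b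

/-- A Morse direction of one of the two factors is `M`-Morse. -/
def MorseDirSum (dA : A → A → ℝ) (dB : B → B → ℝ) (M : MorseGauge) :
    MorseBoundaryN dA (1 : A) ⊕ MorseBoundaryN dB (1 : B) → Prop
  | Sum.inl z => MorseDirN dA 1 M z
  | Sum.inr z => MorseDirN dB 1 M z

/-- Conditions on an infinite syllable sequence: starts in `A`, alternates, and all
syllables except possibly the first are nontrivial. -/
def SylSeqOK (u : ℕ → A ⊕ B) : Prop :=
  (u 0).isLeft = true ∧ (∀ i, (u i).isLeft ≠ (u (i + 1)).isLeft) ∧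
    ∀ i, 1 ≤ i → u i ≠ Sum.inl (1 : A) ∧ u i ≠ Sum.inr (1 : B)

/-- Conditions on a finite syllable list: starts in `A`, alternates, and all syllables
except possibly the first are nontrivial. -/
def SylListOK (l : List (A ⊕ B)) : Prop :=
  (∀ x ∈ l.head?, x.isLeft = true) ∧ l.Chain' (fun x y => x.isLeft ≠ y.isLeft) ∧
    ∀ x ∈ l.tail, x ≠ Sum.inl (1 : A) ∧ x ≠ Sum.inr (1 : B)

/-- A combinatorial Morse geodesic of infinite type. -/
structure CombInf (dA : A → A → ℝ) (dB : B → B → ℝ) : Type _ where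
  u : ℕ → A ⊕ B
  ok : SylSeqOK u
  morse : ∃ M : MorseGauge, ∀ i, MorsePtSum dA dB M (u i)

/-- A combinatorial Morse geodesic of finite type. -/
structure CombFin (dA : A → A → ℝ) (dB : B → B → ℝ) : Type _ where
  l : List (A ⊕ B)
  z : MorseBoundaryN dA (1 : A) ⊕ MorseBoundaryN dB (1 : B)
  ok : SylListOK l
  parity : Even l.length ↔ z.isLeft = true
  morse : ∃ M : MorseGauge, (∀ x ∈ l, MorsePtSum dA dB M x) ∧ MorseDirSum dA dB M z

/-- The combinatorial Morse boundary of the free product. -/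
def CombBoundary (dA : A → A → ℝ) (dB : B → B → ℝ) : Type _ :=
  CombInf dA dB ⊕ CombFin dA dB

/-- The prefix product `v_i` of the first `i` syllables of an infinite sequence. -/
def sylProd (u : ℕ → A ⊕ B) (i : ℕ) : Monoid.Coprod A B :=
  ((List.range i).map (fun j => sylElem (u j))).prod

/-- The prefix product of the first `i` syllables of a finite list. -/
def sylProdL (l : List (A ⊕ B)) (i : ℕ) : Monoid.Coprod A B :=
  ((l.take i).map sylElem).prod

end FreeProduct

section Statement16

variable {A B : Type*} [Group A] [Group B]

/-- The ray `η` in the free product represents the infinite-type combinatorial geodesic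
`c`: it passes through all prefix points `v_i`, and between `v_i` and `v_{i+1}` stays in
the coset `v_i Γ_{factor of u_i}`. -/
def RepInf (SA : Set A) (SB : Set B) (c : CombInf (wordDist SA) (wordDist SB))
    (η : MRayN (wordDist (fpGens SA SB)) (1 : Monoid.Coprod A B)) : Prop :=
  ∃ t : ℕ → ℕ, t 0 = 0 ∧ Monotone t ∧
    (∀ i, η.1 (t i) = sylProd c.u i) ∧
    ∀ i s, t i ≤ s → s ≤ t (i + 1) →
      ∃ x : A ⊕ B, x.isLeft = (c.u i).isLeft ∧ η.1 s = sylProd c.u i * sylElem x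

/-- The ray `η` represents the finite-type combinatorial geodesic `c`: it passes through
the prefix points, stays in the appropriate cosets in between, and its tail is the
translate by `v_n` of a ray in the factor realizing the Morse direction `c.z`. -/
def RepFin (SA : Set A) (SB : Set B) (c : CombFin (wordDist SA) (wordDist SB))
    (η : MRayN (wordDist (fpGens SA SB)) (1 : Monoid.Coprod A B)) : Prop :=
  ∃ t : ℕ → ℕ, t 0 = 0 ∧ Monotone t ∧
    (∀ i ≤ c.l.length, η.1 (t i) = sylProdL c.l i) ∧
    (∀ (i : ℕ) (hi : i < c.l.length), ∀ s, t i ≤ s → s ≤ t (i + 1) →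
      ∃ x : A ⊕ B, x.isLeft = (c.l.get ⟨i, hi⟩).isLeft ∧
        η.1 s = sylProdL c.l i * sylElem x) ∧
    (match c.z with
      | Sum.inl zA => ∃ ζ : MRayN (wordDist SA) (1 : A), Quot.mk _ ζ = zA ∧
          ∀ s, η.1 (t c.l.length + s) =
            sylProdL c.l c.l.length * Monoid.Coprod.inl (ζ.1 s)
      | Sum.inr zB => ∃ ζ : MRayN (wordDist SB) (1 : B), Quot.mk _ ζ = zB ∧
          ∀ s, η.1 (t c.l.length + s) =
            sylProdL c.l c.l.length * Monoid.Coprod.inr (ζ.1 s))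

/-- `η` represents the combinatorial Morse geodesic `a`. -/
def Represents (SA : Set A) (SB : Set B)
    (a : CombBoundary (wordDist SA) (wordDist SB))
    (η : MRayN (wordDist (fpGens SA SB)) (1 : Monoid.Coprod A B)) : Prop :=
  match a with
  | Sum.inl c => RepInf SA SB c η
  | Sum.inr c => RepFin SA SB c η


/-!
Sending an element of a free product to the first syllable of its reduced word defines, for each
coset of a factor, a gate map onto that coset: an edge of the Cayley graph on which the map is not
constant lies in the coset, and the map is a 1-Lipschitz retraction. A path between points with
different projections must therefore pass through both of them. In particular every path to a point
behind a prefix vertex visits that vertex, so concatenations of geodesics through the prefix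
vertices are geodesic. A quasi-geodesic with endpoints on such a ray stays uniformly close to its
projection to one of the cosets that the ray crosses, where it is controlled by the Morse property
of the corresponding piece; this gives one gauge for the whole ray. Conversely, a Morse geodesic ray
spells out its syllables as it leaves successive cosets, and retracting to a coset shows that its
pieces are Morse there. Finally, rays at bounded distance eventually have the same projection to
every coset that one of them leaves, so they have the same syllables.
-/

section FreeSplitting

variable {G G' : Type*} [Group G] [Group G'] {H : Bool → Subgroup G} {ρ : Bool → G → G}

/-- A splitting of `G` as the free product of two subgroups, recorded by the map `ρ σ` that sends
an element to the first syllable of its reduced word if that syllable lies in `H σ`, and to `1`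
otherwise. The last field is induction on reduced words. -/
structure IsFreeSplitting (H : Bool → Subgroup G) (ρ : Bool → G → G) : Prop where
  proj_mem : ∀ σ g, ρ σ g ∈ H σ
  proj_mul : ∀ {σ h}, h ∈ H σ → ∀ g, ρ σ (h * g) = h * ρ σ g
  proj_one : ∀ σ, ρ σ 1 = 1
  proj_not : ∀ {σ g}, ρ σ g ≠ 1 → ρ (!σ) g = 1
  induction_on : ∀ {P : G → Prop} (g : G) (one : P 1)
    (cons : ∀ σ x g, x ∈ H σ → x ≠ 1 → ρ σ g = 1 → P g → P (x * g)), P g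

namespace IsFreeSplitting

theorem proj_of_mem (h : IsFreeSplitting H ρ) {σ : Bool} {x : G} (hx : x ∈ H σ) : ρ σ x = x := by
  simpa [h.proj_one] using h.proj_mul hx 1

theorem proj_not_of_mem (h : IsFreeSplitting H ρ) {σ : Bool} {x : G} (hx : x ∈ H σ) :
    ρ (!σ) x = 1 := by
  obtain rfl | hx1 := eq_or_ne x 1
  · exact h.proj_one _
  · exact h.proj_not (by rwa [h.proj_of_mem hx])

theorem proj_mul_of_proj_eq_one (h : IsFreeSplitting H ρ) {σ : Bool} {x g : G} (hx : x ∈ H σ)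
    (hg : ρ σ g = 1) : ρ σ (x * g) = x := by
  rw [h.proj_mul hx, hg, mul_one]

theorem proj_not_mul_of_proj_eq_one (h : IsFreeSplitting H ρ) {σ : Bool} {x g : G} (hx : x ∈ H σ)
    (hx1 : x ≠ 1) (hg : ρ σ g = 1) : ρ (!σ) (x * g) = 1 :=
  h.proj_not (by rwa [h.proj_mul_of_proj_eq_one hx hg])

theorem eq_one_of_proj_eq_one (h : IsFreeSplitting H ρ) {g : G} (hg : ∀ σ, ρ σ g = 1) : g = 1 := by
  induction g using h.induction_on with
  | one => rfl
  | cons σ x g hx hx1 hσ _ => exact absurd (h.proj_mul_of_proj_eq_one hx hσ ▸ hg σ) hx1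

theorem proj_mul_eq_or_mem (h : IsFreeSplitting H ρ) {τ : Bool} {s : G} (hs : s ∈ H τ) (g : G) :
    ∀ σ, ρ σ (g * s) = ρ σ g ∨ g ∈ H σ ∧ s ∈ H σ := by
  induction g using h.induction_on with
  | one =>
    intro σ
    obtain rfl | hσ := eq_or_ne σ τ
    · exact .inr ⟨one_mem _, hs⟩
    · rw [Bool.eq_not_of_ne hσ, one_mul, h.proj_not_of_mem hs, h.proj_one]
      exact .inl rfl
  | cons κ x g hx hx1 hg ih =>
    intro σ
    obtain rfl | hσ := eq_or_ne σ κ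
    · rw [mul_assoc, h.proj_mul hx, h.proj_mul hx]
      exact (ih σ).imp (congrArg _) (And.imp_left (mul_mem hx))
    · rw [Bool.eq_not_of_ne hσ, h.proj_not_mul_of_proj_eq_one hx hx1 hg, mul_assoc]
      refine .inl ?_
      obtain hgs | ⟨hgκ, hsκ⟩ := ih κ
      · exact h.proj_not_mul_of_proj_eq_one hx hx1 (hgs.trans hg)
      · exact h.proj_not_of_mem (mul_mem hx (mul_mem hgκ hsκ))

theorem mem_of_proj_mul_ne (h : IsFreeSplitting H ρ) {σ τ : Bool} {g s : G} (hs : s ∈ H τ)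
    (hne : ρ σ (g * s) ≠ ρ σ g) : g ∈ H σ :=
  ((h.proj_mul_eq_or_mem hs g σ).resolve_left hne).1

theorem map (h : IsFreeSplitting H ρ) (e : G ≃* G') :
    IsFreeSplitting (fun σ => (H σ).map e.toMonoidHom) (fun σ g => e (ρ σ (e.symm g))) where
  proj_mem σ g := ⟨_, h.proj_mem σ _, rfl⟩
  proj_mul := by
    rintro σ _ ⟨x, hx, rfl⟩ g
    simp [h.proj_mul hx]
  proj_one σ := by simp [h.proj_one]
  proj_not hg := by
    rw [h.proj_not (by rwa [← e.map_ne_one_iff]), map_one]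
  induction_on := by
    intro P g h1 hmul
    obtain ⟨g, rfl⟩ := e.surjective g
    induction g using h.induction_on with
    | one => rwa [map_one]
    | cons σ x g hx hx1 hg ih =>
      rw [map_mul]
      exact hmul σ _ _ ⟨x, hx, rfl⟩ (e.map_ne_one_iff.2 hx1) (by simp [hg]) ih

end IsFreeSplitting

open Classical Monoid.CoprodI in
theorem isFreeSplitting_coprodI (M : Bool → Type*) [∀ σ, Group (M σ)] :
    IsFreeSplitting (fun σ => (of : M σ →* CoprodI M).range)
      (fun σ g => of (Word.equivPair σ (Word.equiv g)).head) := by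
  have proj_eq_one {σ : Bool} {w : Word M} (hw : w.fstIdx ≠ some σ) :
      (of (Word.equivPair σ w).head : CoprodI M) = 1 := by
    rw [Word.equivPair_eq_of_fstIdx_ne hw, map_one]
  refine ⟨fun σ g => ⟨_, rfl⟩, ?_, fun σ => ?_, fun {σ g} hg => ?_, fun {P} g h1 hmul => ?_⟩
  · rintro σ _ ⟨x, rfl⟩ g
    have hmul : Word.equiv (of x * g) = of x • Word.equiv g :=
      mul_smul (of x) g (Word.empty (M := M))
    rw [hmul, Word.equivPair_smul_same, map_mul]
  · refine proj_eq_one ?_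
    have hone : Word.equiv (1 : CoprodI M) = Word.empty := one_smul (CoprodI M) Word.empty
    rw [hone]
    simp [Word.fstIdx, Word.empty]
  · refine proj_eq_one ?_
    have hσ : (Word.equiv g).fstIdx = some σ := not_not.1 fun hw => hg (proj_eq_one hw)
    simp [hσ]
  · obtain ⟨w, rfl⟩ := Word.equiv.symm.surjective g
    change P w.prod
    induction w using Word.consRecOn with
    | empty => rwa [Word.prod_empty]
    | cons σ x w hw hx ih =>
      rw [Word.prod_cons]
      refine hmul σ (of x) w.prod ⟨x, rfl⟩ ((map_ne_one_iff of (of_injective σ)).2 hx) ?_ ih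
      rw [show Word.equiv w.prod = w from Word.equiv.right_inv w, proj_eq_one hw]

end FreeSplitting

section WordMetric

/-- The axioms of a pseudometric, for a distance given as a bare function. -/
structure IsPseudoMetric {X : Type*} (d : X → X → ℝ) : Prop where
  self : ∀ x, d x x = 0
  comm : ∀ x y, d x y = d y x
  triangle : ∀ x y z, d x z ≤ d x y + d y z

theorem IsPseudoMetric.nonneg {X : Type*} {d : X → X → ℝ} (hd : IsPseudoMetric d) (x y : X) :
    0 ≤ d x y := by
  linarith [hd.triangle x y x, hd.self x, hd.comm x y]

variable {G G' : Type*} [Group G] [Group G'] {S : Set G} {S' : Set G'} {l l' : List G} {x y : G}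

namespace IsWordOver

theorem append (hl : IsWordOver S l) (hl' : IsWordOver S l') : IsWordOver S (l ++ l') := by
  simpa only [IsWordOver, List.forall_mem_append] using And.intro hl hl'

theorem inv_reverse (hl : IsWordOver S l) : IsWordOver S (l.map (·⁻¹)).reverse := by
  intro x hx
  obtain ⟨y, hy, rfl⟩ := List.mem_map.1 (List.mem_reverse.1 hx)
  simpa only [inv_inv] using (hl y hy).symm

end IsWordOver

theorem wordDist_le_length (hl : IsWordOver S l) (hprod : l.prod = x⁻¹ * y) :
    wordDist S x y ≤ l.length := by
  refine csInf_le ⟨0, ?_⟩ ⟨l, hl, hprod, rfl⟩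
  rintro _ ⟨l, _, _, rfl⟩
  positivity

theorem exists_isWordOver_prod_eq (hS : Subgroup.closure S = ⊤) (g : G) :
    ∃ l, IsWordOver S l ∧ l.prod = g := by
  have hg : g ∈ Submonoid.closure (S ∪ S⁻¹) := by
    rw [← Subgroup.closure_toSubmonoid, hS]
    trivial
  exact Submonoid.exists_list_of_mem_closure hg

theorem exists_isWordOver_length_eq (hS : Subgroup.closure S = ⊤) (x y : G) :
    ∃ l, IsWordOver S l ∧ l.prod = x⁻¹ * y ∧ wordDist S x y = l.length := by
  obtain ⟨l, ⟨hl, hprod⟩, hmin⟩ := exists_minimalFor_of_wellFoundedLT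
    (fun l => IsWordOver S l ∧ l.prod = x⁻¹ * y) List.length (exists_isWordOver_prod_eq hS _)
  refine ⟨l, hl, hprod, (wordDist_le_length hl hprod).antisymm ?_⟩
  refine le_csInf ⟨_, l, hl, hprod, rfl⟩ ?_
  rintro _ ⟨l', hl', hprod', rfl⟩
  exact_mod_cast (le_total _ _).elim id (hmin ⟨hl', hprod'⟩)

theorem wordDist_mul_left (g x y : G) : wordDist S (g * x) (g * y) = wordDist S x y := by
  simp only [wordDist, mul_inv_rev, mul_assoc, inv_mul_cancel_left]

theorem isPseudoMetric_wordDist (hS : Subgroup.closure S = ⊤) : IsPseudoMetric (wordDist S) where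
  self x := by
    obtain ⟨l, -, -, hlen⟩ := exists_isWordOver_length_eq hS x x
    refine le_antisymm ?_ (hlen ▸ Nat.cast_nonneg _)
    simpa using wordDist_le_length (S := S) (x := x) (y := x) (l := []) (by simp [IsWordOver])
  comm := by
    have le_swap (x y : G) : wordDist S x y ≤ wordDist S y x := by
      obtain ⟨l, hl, hprod, hlen⟩ := exists_isWordOver_length_eq hS y x
      have hprod' : (l.map (·⁻¹)).reverse.prod = x⁻¹ * y := by
        rw [← List.prod_inv_reverse, hprod, mul_inv_rev, inv_inv]
      simpa [hlen] using wordDist_le_length hl.inv_reverse hprod'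
    exact fun x y => (le_swap x y).antisymm (le_swap y x)
  triangle x y z := by
    obtain ⟨l, hl, hprod, hlen⟩ := exists_isWordOver_length_eq hS x y
    obtain ⟨l', hl', hprod', hlen'⟩ := exists_isWordOver_length_eq hS y z
    have happend : (l ++ l').prod = x⁻¹ * z := by rw [List.prod_append, hprod, hprod']; group
    simpa [hlen, hlen'] using wordDist_le_length (hl.append hl') happend

theorem wordDist_map_le (hS : Subgroup.closure S = ⊤) (φ : G →* G')
    (hφ : ∀ s ∈ S, φ s ∈ S' ∨ φ s = 1) (x y : G) :
    wordDist S' (φ x) (φ y) ≤ wordDist S x y := by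
  obtain ⟨l, hl, hprod, hlen⟩ := exists_isWordOver_length_eq hS x y
  have hφ' (s : G) (hs : s ∈ S ∨ s⁻¹ ∈ S) : (φ s ∈ S' ∨ (φ s)⁻¹ ∈ S') ∨ φ s = 1 := by
    refine hs.elim (fun hs => (hφ s hs).imp_left .inl) fun hs => ?_
    rw [← map_inv, ← inv_eq_one, ← map_inv]
    exact (hφ _ hs).imp_left .inr
  obtain ⟨l', hl', hprod', hlen'⟩ : ∃ l', IsWordOver S' l' ∧ l'.prod = φ l.prod ∧
      l'.length ≤ l.length := by
    clear hprod hlen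
    induction l with
    | nil => exact ⟨[], by simp [IsWordOver]⟩
    | cons s l ih =>
      obtain ⟨hs, hl⟩ := List.forall_mem_cons.1 hl
      obtain ⟨l', hl', hprod', hlen'⟩ := ih hl
      obtain hs | hs := hφ' s hs
      · exact ⟨φ s :: l', List.forall_mem_cons.2 ⟨hs, hl'⟩, by simp [hprod'], by simpa⟩
      · exact ⟨l', hl', by simp [hprod', hs], by simpa using hlen'.trans (Nat.le_succ _)⟩
  refine (wordDist_le_length hl' (by rw [hprod', hprod, map_mul, map_inv])).trans ?_
  rw [hlen]
  exact_mod_cast hlen'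

theorem wordDist_map_of_leftInverse (hS : Subgroup.closure S = ⊤) (hS' : Subgroup.closure S' = ⊤)
    (f : G →* G') (r : G' →* G) (hrf : Function.LeftInverse r f) (hf : ∀ s ∈ S, f s ∈ S')
    (hr : ∀ s ∈ S', r s ∈ S ∨ r s = 1) (x y : G) :
    wordDist S' (f x) (f y) = wordDist S x y := by
  refine (wordDist_map_le hS f (fun s hs => .inl (hf s hs)) x y).antisymm ?_
  simpa only [hrf x, hrf y] using wordDist_map_le hS' r hr (f x) (f y)

end WordMetric

section GateMap

variable {X : Type*} {d : X → X → ℝ} {π : X → X}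

/-- A gate map: whenever `x` and `y` have different images, the points `x`, `π x`, `π y`, `y` lie
in this order on a geodesic, so a path from `x` to `y` has to enter and leave through them. -/
def IsGateMap (d : X → X → ℝ) (π : X → X) : Prop :=
  ∀ x y, π x ≠ π y → d x y = d x (π x) + d (π x) (π y) + d (π y) y

namespace IsGateMap

theorem dist_map_le (hd : IsPseudoMetric d) (hπ : IsGateMap d π) (x y : X) :
    d (π x) (π y) ≤ d x y := by
  obtain hxy | hxy := eq_or_ne (π x) (π y)
  · rw [hxy, hd.self]
    exact hd.nonneg x y
  · linarith [hπ x y hxy, hd.nonneg x (π x), hd.nonneg (π y) y]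

theorem dist_left_le (hd : IsPseudoMetric d) (hπ : IsGateMap d π) {x y : X} (h : π x ≠ π y) :
    d x (π x) ≤ d x y := by
  linarith [hπ x y h, hd.nonneg (π x) (π y), hd.nonneg (π y) y]

theorem dist_right_le (hd : IsPseudoMetric d) (hπ : IsGateMap d π) {x y : X} (h : π x ≠ π y) :
    d (π y) y ≤ d x y := by
  linarith [hπ x y h, hd.nonneg (π x) (π y), hd.nonneg x (π x)]

end IsGateMap

variable {G : Type*} [Group G] {H : Bool → Subgroup G} {ρ : Bool → G → G} {S : Set G}

/-- The projection of `G` to the coset `v * H σ`, translated from the projection `ρ σ` to `H σ`. -/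
def cosetProj (ρ : Bool → G → G) (σ : Bool) (v x : G) : G := v * ρ σ (v⁻¹ * x)

/-- A free splitting together with a generating set of elements of the two factors. -/
structure IsAdaptedSplitting (H : Bool → Subgroup G) (ρ : Bool → G → G) (S : Set G) : Prop
    extends IsFreeSplitting H ρ where
  closure_eq_top : Subgroup.closure S = ⊤
  exists_mem_factor : ∀ s ∈ S, ∃ τ, s ∈ H τ

namespace IsAdaptedSplitting

theorem isPseudoMetric (h : IsAdaptedSplitting H ρ S) : IsPseudoMetric (wordDist S) :=
  isPseudoMetric_wordDist h.closure_eq_top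

theorem exists_mem_factor_of_letter (h : IsAdaptedSplitting H ρ S) {s : G}
    (hs : s ∈ S ∨ s⁻¹ ∈ S) : ∃ τ, s ∈ H τ :=
  hs.elim (h.exists_mem_factor s) fun hs => (h.exists_mem_factor _ hs).imp fun _ => inv_mem_iff.1

theorem exists_mem_factor_of_wordDist_eq_one (h : IsAdaptedSplitting H ρ S) {x y : G}
    (hxy : wordDist S x y = 1) : ∃ τ, x⁻¹ * y ∈ H τ := by
  obtain ⟨l, hl, hprod, hlen⟩ := exists_isWordOver_length_eq h.closure_eq_top x y
  obtain ⟨s, rfl⟩ : ∃ s, l = [s] := List.length_eq_one_iff.1 (by exact_mod_cast hlen.symm.trans hxy)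
  rw [← hprod, List.prod_singleton]
  exact h.exists_mem_factor_of_letter (hl s (List.mem_singleton_self s))

theorem exists_append_of_proj_ne (h : IsAdaptedSplitting H ρ S) {σ : Bool} {l : List G}
    (hl : IsWordOver S l) {x : G} (hx : ρ σ x ≠ ρ σ (x * l.prod)) :
    ∃ l₁ l₂, l = l₁ ++ l₂ ∧ x * l₁.prod = ρ σ x := by
  induction l generalizing x with
  | nil => simp at hx
  | cons s l ih =>
    obtain ⟨hs, hl⟩ := List.forall_mem_cons.1 hl
    by_cases hxs : ρ σ (x * s) = ρ σ x
    · obtain ⟨l₁, l₂, rfl, hl₁⟩ := ih hl (x := x * s) (by rwa [hxs, mul_assoc, ← List.prod_cons])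
      exact ⟨s :: l₁, l₂, rfl, by rw [List.prod_cons, ← mul_assoc, hl₁, hxs]⟩
    · obtain ⟨τ, hτ⟩ := h.exists_mem_factor_of_letter hs
      refine ⟨[], s :: l, rfl, ?_⟩
      rw [List.prod_nil, mul_one, h.proj_of_mem (h.mem_of_proj_mul_ne hτ hxs)]

theorem wordDist_proj_add_le (h : IsAdaptedSplitting H ρ S) {σ : Bool} {x y : G}
    (hxy : ρ σ x ≠ ρ σ y) :
    wordDist S x (ρ σ x) + wordDist S (ρ σ x) y ≤ wordDist S x y := by
  obtain ⟨l, hl, hprod, hlen⟩ := exists_isWordOver_length_eq h.closure_eq_top x y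
  obtain ⟨l₁, l₂, rfl, hl₁⟩ :=
    h.exists_append_of_proj_ne hl (x := x) (by rwa [hprod, mul_inv_cancel_left])
  obtain ⟨hw₁, hw₂⟩ := List.forall_mem_append.1 hl
  have hle₁ : wordDist S x (ρ σ x) ≤ l₁.length :=
    wordDist_le_length hw₁ (by rw [← hl₁, inv_mul_cancel_left])
  have hle₂ : wordDist S (ρ σ x) y ≤ l₂.length :=
    wordDist_le_length hw₂ (by
      rw [← hl₁, mul_inv_rev, mul_assoc, ← hprod, List.prod_append, inv_mul_cancel_left])
  rw [hlen, List.length_append]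
  push_cast
  linarith

theorem isGateMap_proj (h : IsAdaptedSplitting H ρ S) (σ : Bool) :
    IsGateMap (wordDist S) (ρ σ) := by
  intro x y hxy
  have hd := h.isPseudoMetric
  have hxx : ρ σ (ρ σ x) = ρ σ x := h.proj_of_mem (h.proj_mem σ x)
  have hx := h.wordDist_proj_add_le hxy
  have hy := h.wordDist_proj_add_le (x := y) (y := ρ σ x) (by rw [hxx]; exact hxy.symm)
  rw [hd.comm y (ρ σ x), hd.comm y (ρ σ y), hd.comm (ρ σ y) (ρ σ x)] at hy
  linarith [hd.triangle x (ρ σ x) y, hd.triangle (ρ σ x) (ρ σ y) y]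

theorem isGateMap_cosetProj (h : IsAdaptedSplitting H ρ S) (σ : Bool) (v : G) :
    IsGateMap (wordDist S) (cosetProj ρ σ v) := by
  intro x y hxy
  have key := h.isGateMap_proj σ (v⁻¹ * x) (v⁻¹ * y) fun hρ => hxy (congrArg (v * ·) hρ)
  rw [← wordDist_mul_left v (v⁻¹ * x), ← wordDist_mul_left v (v⁻¹ * x) (ρ σ _),
    ← wordDist_mul_left v (ρ σ _) (ρ σ _), ← wordDist_mul_left v (ρ σ _) (v⁻¹ * y)] at key
  simpa only [mul_inv_cancel_left, cosetProj] using key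

end IsAdaptedSplitting

end GateMap

section QuasiGeodesics

variable {X X' : Type*} {d : X → X → ℝ} {d' : X' → X' → ℝ} {π : X → X} {L e R : ℝ} {η : ℕ → X}
  {a b i : ℕ} {s : Set ℕ}

namespace IsQGOnN

theorem mono {t : Set ℕ} (hq : IsQGOnN d L e η s) (hts : t ⊆ s) : IsQGOnN d L e η t :=
  fun i hi j hj => hq i (hts hi) j (hts hj)

theorem dist_succ_le (hq : IsQGOnN d L e η s) (hi : i ∈ s) (hi' : i + 1 ∈ s) :
    d (η i) (η (i + 1)) ≤ L + e := by
  simpa using (hq i hi (i + 1) hi').2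

theorem of_dist_le (hd : IsPseudoMetric d) (hq : IsQGOnN d L e η s) {η' : ℕ → X}
    (hη' : ∀ i ∈ s, d (η i) (η' i) ≤ R) : IsQGOnN d L (e + 2 * R) η' s := by
  intro i hi j hj
  obtain ⟨hlower, hupper⟩ := hq i hi j hj
  have hi' := hη' i hi
  have hj' := hη' j hj
  constructor
  · linarith [hd.triangle (η i) (η' i) (η j), hd.triangle (η' i) (η' j) (η j),
      hd.comm (η j) (η' j)]
  · linarith [hd.triangle (η' i) (η i) (η' j), hd.triangle (η i) (η j) (η' j),
      hd.comm (η i) (η' i)]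

end IsQGOnN

theorem IsGeodesicOnN.comp_isometry {γ : ℕ → X} {f : X → X'}
    (hf : ∀ x y, d' (f x) (f y) = d x y) :
    IsGeodesicOnN d' (f ∘ γ) s ↔ IsGeodesicOnN d γ s := by
  simp only [IsGeodesicOnN, Function.comp_apply, hf]

theorem isGeodesicOnN_univ_of_dist_succ_le (hd : IsPseudoMetric d) {o : X} {γ : ℕ → X}
    (hdist : ∀ i, d o (γ i) = i) (hstep : ∀ i, d (γ i) (γ (i + 1)) ≤ 1) :
    IsGeodesicOnN d γ univ := by
  have dist_add (i m : ℕ) : d (γ i) (γ (i + m)) = m := by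
    refine le_antisymm ?_ ?_
    · induction m with
      | zero => simp [hd.self]
      | succ m ih =>
        rw [← add_assoc, Nat.cast_succ]
        linarith [hd.triangle (γ i) (γ (i + m)) (γ (i + m + 1)), hstep (i + m)]
    · have := hd.triangle o (γ i) (γ (i + m))
      rw [hdist, hdist] at this
      push_cast at this
      linarith
  intro i _ j _
  obtain ⟨m, rfl⟩ | ⟨m, rfl⟩ := (le_total i j).imp Nat.exists_eq_add_of_le Nat.exists_eq_add_of_le
  · rw [dist_add]
    simp
  · rw [hd.comm, dist_add]
    simp

theorem exists_mem_Ico_not_and_succ {P : ℕ → Prop} (hab : a ≤ b) (ha : ¬P a) (hb : P b) :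
    ∃ k ∈ Ico a b, ¬P k ∧ P (k + 1) := by
  by_contra! hstep
  exact Nat.le_induction (P := fun k _ => k ≤ b → ¬P k) (fun _ => ha)
    (fun k hak ih hkb => hstep k ⟨hak, hkb⟩ (ih (Nat.le_of_succ_le hkb))) b hab le_rfl hb

namespace IsGateMap

theorem exists_exit (hd : IsPseudoMetric d) (hπ : IsGateMap d π)
    (hq : IsQGOnN d L e η (Icc a b)) (hab : a ≤ b) (hne : π (η a) ≠ π (η b)) :
    ∃ k ∈ Icc a b, π (η k) = π (η a) ∧ d (η k) (π (η a)) ≤ L + e := by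
  obtain ⟨k, ⟨hak, hkb⟩, hk, hk'⟩ := exists_mem_Ico_not_and_succ
    (P := fun k => π (η k) ≠ π (η a)) hab (not_not.2 rfl) hne.symm
  rw [not_not] at hk
  refine ⟨k, ⟨hak, hkb.le⟩, hk, ?_⟩
  rw [← hk] at hk' ⊢
  exact (hπ.dist_left_le hd hk'.symm).trans
    (hq.dist_succ_le ⟨hak, hkb.le⟩ ⟨hak.trans k.le_succ, hkb⟩)

theorem exists_entry (hd : IsPseudoMetric d) (hπ : IsGateMap d π)
    (hq : IsQGOnN d L e η (Icc a b)) (hab : a ≤ b) (hne : π (η a) ≠ π (η b)) :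
    ∃ k ∈ Icc a b, π (η k) = π (η b) ∧ d (η k) (π (η b)) ≤ L + e := by
  obtain ⟨k, ⟨hak, hkb⟩, hk, hk'⟩ := exists_mem_Ico_not_and_succ
    (P := fun k => π (η k) = π (η b)) hab hne rfl
  refine ⟨k + 1, ⟨hak.trans k.le_succ, hkb⟩, hk', ?_⟩
  rw [← hk'] at hk ⊢
  rw [hd.comm]
  exact (hπ.dist_right_le hd hk).trans
    (hq.dist_succ_le ⟨hak, hkb.le⟩ ⟨hak.trans k.le_succ, hkb⟩)

end IsGateMap

/-- A bound for the distance from a point `p` to an `(L, e)`-quasi-geodesic whose endpoints lie at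
distance at most `L + e` from `p`. -/
noncomputable def excursionBound (L e : ℝ) : ℝ := L * (L * (2 * (L + e) + e)) + e + (L + e)

theorem excursionBound_nonneg (hL : 1 ≤ L) (he : 0 ≤ e) : 0 ≤ excursionBound L e := by
  unfold excursionBound
  positivity

theorem IsQGOnN.dist_le_excursionBound (hd : IsPseudoMetric d) (hL : 1 ≤ L)
    (hq : IsQGOnN d L e η (Icc a b)) (hi : i ∈ Icc a b) {p : X} (ha : d (η a) p ≤ L + e)
    (hb : d (η b) p ≤ L + e) : d (η i) p ≤ excursionBound L e := by
  obtain ⟨hai, hib⟩ := hi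
  have hai' : (a : ℝ) ≤ i := Nat.cast_le.2 hai
  have hib' : (i : ℝ) ≤ b := Nat.cast_le.2 hib
  have hlower := (hq b ⟨hai.trans hib, le_rfl⟩ a ⟨le_rfl, hai.trans hib⟩).1
  have hupper := (hq i ⟨hai, hib⟩ a ⟨le_rfl, hai.trans hib⟩).2
  rw [abs_of_nonneg (by linarith)] at hlower hupper
  have hlength : (b : ℝ) - a ≤ L * (2 * (L + e) + e) := by
    rw [← inv_mul_le_iff₀ (by linarith), ← one_div]
    linarith [hd.triangle (η b) p (η a), hd.comm p (η a)]
  have hprefix : L * ((i : ℝ) - a) ≤ L * (L * (2 * (L + e) + e)) :=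
    mul_le_mul_of_nonneg_left (by linarith) (by linarith)
  unfold excursionBound
  linarith [hd.triangle (η i) (η a) p]

/-- The only way to be far from the gate is to have entered and left through it, in which case the
quasi-geodesic comes close to the gate on both sides. -/
theorem IsGateMap.dist_le_excursionBound (hd : IsPseudoMetric d) (hπ : IsGateMap d π) (hL : 1 ≤ L)
    (hq : IsQGOnN d L e η (Icc a b)) (hi : i ∈ Icc a b)
    (ha : π (η a) = π (η i) → d (η a) (π (η i)) ≤ L + e)
    (hb : π (η b) = π (η i) → d (η b) (π (η i)) ≤ L + e) :
    d (η i) (π (η i)) ≤ excursionBound L e := by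
  obtain ⟨k, hk, hkd⟩ : ∃ k ∈ Icc a i, d (η k) (π (η i)) ≤ L + e := by
    by_cases h : π (η a) = π (η i)
    · exact ⟨a, ⟨le_rfl, hi.1⟩, ha h⟩
    · obtain ⟨k, hk, -, hkd⟩ :=
        hπ.exists_entry hd (hq.mono (Icc_subset_Icc_right hi.2)) hi.1 h
      exact ⟨k, hk, hkd⟩
  obtain ⟨m, hm, hmd⟩ : ∃ m ∈ Icc i b, d (η m) (π (η i)) ≤ L + e := by
    by_cases h : π (η b) = π (η i)
    · exact ⟨b, ⟨hi.2, le_rfl⟩, hb h⟩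
    · obtain ⟨m, hm, -, hmd⟩ :=
        hπ.exists_exit hd (hq.mono (Icc_subset_Icc_left hi.1)) hi.2 (Ne.symm h)
      exact ⟨m, hm, hmd⟩
  exact (hq.mono (Icc_subset_Icc hk.1 hm.2)).dist_le_excursionBound hd hL ⟨hk.2, hm.1⟩ hkd hmd

end QuasiGeodesics

section MorseSets

variable {X X' : Type*} {d : X → X → ℝ} {d' : X' → X' → ℝ} {π : X → X} {M : MorseGauge}
  {K Y Z : Set X}

/-- The set `Y` is `M`-Morse relative to quasi-geodesics contained in `K`: quasi-geodesics in `K`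
with endpoints on `Y` stay close to `Y`. -/
def IsMorseIn (d : X → X → ℝ) (K : Set X) (M : MorseGauge) (Y : Set X) : Prop :=
  ∀ L e, 1 ≤ L → 0 ≤ e → ∀ (η : ℕ → X) (a b : ℕ), a ≤ b → MapsTo η (Icc a b) K →
    IsQGOnN d L e η (Icc a b) → η a ∈ Y → η b ∈ Y → ∀ i ∈ Icc a b, ∃ y ∈ Y, d (η i) y ≤ M L e

theorem isMorseOnN_iff_isMorseIn_univ {γ : ℕ → X} {s : Set ℕ} :
    IsMorseOnN d M γ s ↔ IsMorseIn d univ M (γ '' s) := by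
  simp only [IsMorseOnN, IsMorseIn, mapsTo_univ, true_imp_iff, exists_mem_image]

theorem isMorseIn_image_iff {f : X → X'} (hf : ∀ x y, d' (f x) (f y) = d x y) {r : X' → X}
    (hr : Function.LeftInverse r f) :
    IsMorseIn d' (f '' K) M (f '' Y) ↔ IsMorseIn d K M Y := by
  have f_r {T : Set X} {y : X'} (hy : y ∈ f '' T) : r y ∈ T ∧ f (r y) = y := by
    obtain ⟨x, hx, rfl⟩ := hy
    rw [hr]
    exact ⟨hx, rfl⟩
  constructor
  · intro h L e hL he η a b hab hK hq ha hb i hi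
    obtain ⟨_, ⟨y, hy, rfl⟩, hdist⟩ := h L e hL he (f ∘ η) a b hab
      (fun i hi => mem_image_of_mem f (hK hi)) (by simpa only [IsQGOnN, Function.comp_apply, hf])
      (mem_image_of_mem f ha) (mem_image_of_mem f hb) i hi
    exact ⟨y, hy, (hf _ _).symm.trans_le hdist⟩
  · intro h L e hL he η a b hab hK hq ha hb i hi
    have hq' : IsQGOnN d L e (r ∘ η) (Icc a b) := by
      intro i hi j hj
      rw [Function.comp_apply, Function.comp_apply, ← hf, (f_r (hK hi)).2, (f_r (hK hj)).2]
      exact hq i hi j hj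
    obtain ⟨y, hy, hdist⟩ := h L e hL he (r ∘ η) a b hab (fun i hi => (f_r (hK hi)).1) hq'
      (f_r ha).1 (f_r hb).1 i hi
    refine ⟨f y, mem_image_of_mem f hy, ?_⟩
    rwa [← (f_r (hK hi)).2, hf]

theorem IsMorseIn.of_retraction {K' : Set X} (h : IsMorseIn d K M Y) (hK : K' ⊆ K) (hZ : Z ⊆ Y)
    (hπ : ∀ x y, d (π x) (π y) ≤ d x y) (hfix : ∀ x ∈ K', π x = x) (hmaps : MapsTo π Y Z) :
    IsMorseIn d K' M Z := by
  intro L e hL he η a b hab hη hq ha hb i hi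
  obtain ⟨y, hy, hdist⟩ := h L e hL he η a b hab (hη.mono_right hK) hq (hZ ha) (hZ hb) i hi
  refine ⟨π y, hmaps hy, ?_⟩
  rw [← hfix _ (hη hi)]
  exact (hπ _ _).trans hdist

/-- The Morse gauge of a union of `M`-Morse pieces separated by gates: a quasi-geodesic is at
distance at most `excursionBound L e` from its image under a gate map, and this image is a
quasi-geodesic with additive constant `e + 2 * excursionBound L e`. -/
noncomputable def concatGauge (M : MorseGauge) : MorseGauge := fun L e =>
  excursionBound L e + |M L (e + 2 * excursionBound L e)|

theorem IsGateMap.exists_dist_le (hd : IsPseudoMetric d) (hπ : IsGateMap d π)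
    (hM : IsMorseIn d (range π) M Z) {L e : ℝ} (hL : 1 ≤ L) (he : 0 ≤ e) {η : ℕ → X} {a b i : ℕ}
    (hq : IsQGOnN d L e η (Icc a b)) (hi : i ∈ Icc a b) (ha : π (η a) ∈ Z) (hb : π (η b) ∈ Z)
    (hZ : π (η i) ∉ Z) : ∃ z ∈ Z, d (π (η i)) z ≤ M L (e + 2 * excursionBound L e) := by
  obtain ⟨k, hk, hka, hkd⟩ := hπ.exists_exit hd (hq.mono (Icc_subset_Icc_right hi.2)) hi.1
    fun h => hZ (h ▸ ha)
  obtain ⟨m, hm, hmb, hmd⟩ := hπ.exists_entry hd (hq.mono (Icc_subset_Icc_left hi.1)) hi.2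
    fun h => hZ (h ▸ hb)
  replace hq := hq.mono (Icc_subset_Icc hk.1 hm.2)
  have hclose (j : ℕ) (hj : j ∈ Icc k m) : d (η j) (π (η j)) ≤ excursionBound L e :=
    hπ.dist_le_excursionBound hd hL hq hj (fun h => by rwa [← h, hka]) fun h => by rwa [← h, hmb]
  exact hM L _ hL (by linarith [excursionBound_nonneg hL he]) (π ∘ η) k m (hk.2.trans hm.1)
    (fun j _ => mem_range_self (η j)) (hq.of_dist_le hd hclose)
    (by rwa [Function.comp_apply, hka]) (by rwa [Function.comp_apply, hmb]) i ⟨hk.2, hm.1⟩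

theorem IsMorseIn.of_isGateMap (hd : IsPseudoMetric d)
    (h : ∀ x, ∃ π Z, IsGateMap d π ∧ Z ⊆ Y ∧ MapsTo π Y Z ∧
      (∀ y ∈ Y, π y = π x → π y = y ∨ π x = x) ∧ IsMorseIn d (range π) M Z) :
    IsMorseIn d univ (concatGauge M) Y := by
  intro L e hL he η a b _ _ hq ha hb i hi
  obtain ⟨π, Z, hπ, hZY, hmaps, hgate, hM⟩ := h (η i)
  have hR := excursionBound_nonneg hL he
  have hclose : d (η i) (π (η i)) ≤ excursionBound L e := by
    obtain hfix | hfix := eq_or_ne (π (η i)) (η i)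
    · rwa [hfix, hd.self]
    · have dist_gate {y : X} (hy : y ∈ Y) (hyi : π y = π (η i)) : d y (π (η i)) ≤ L + e := by
        rw [← hyi, (hgate y hy hyi).resolve_right hfix, hd.self]
        linarith
      exact hπ.dist_le_excursionBound hd hL hq hi (dist_gate ha) (dist_gate hb)
  by_cases hZ : π (η i) ∈ Z
  · exact ⟨_, hZY hZ, hclose.trans (le_add_of_nonneg_right (abs_nonneg _))⟩
  · obtain ⟨z, hz, hzd⟩ := hπ.exists_dist_le hd hM hL he hq hi (hmaps ha) (hmaps hb) hZ
    exact ⟨z, hZY hz, (hd.triangle _ _ _).trans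
      (add_le_add hclose (hzd.trans (le_abs_self _)))⟩

end MorseSets

section Syllables

open scoped Pointwise

/-- The factor containing the `k`-th syllable of an alternating sequence starting in the factor
`true`. -/
def factorIdx : ℕ → Bool
  | 0 => true
  | k + 1 => !factorIdx k

theorem natCast_succ_le_iff {k : ℕ} {N : ℕ∞} : ((k + 1 : ℕ) : ℕ∞) ≤ N ↔ (k : ℕ∞) < N := by
  rw [Nat.cast_succ, ENat.add_one_le_iff (ENat.natCast_ne_top k)]

theorem exists_first_not {N : ℕ∞} {Q : ℕ → Prop} (hQ : N = ⊤ → ∃ k, ¬Q k) :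
    ∃ k : ℕ, k ≤ N ∧ (k < N → ¬Q k) ∧ ∀ j < k, Q j := by
  classical
  have hex : ∃ k : ℕ, ¬(k < N ∧ Q k) := by
    induction N using ENat.recTopCoe with
    | top => exact (hQ rfl).imp fun k hk h => hk h.2
    | coe n => exact ⟨n, fun h => lt_irrefl _ h.1⟩
  have before {j : ℕ} (hj : j < Nat.find hex) : j < N ∧ Q j := not_not.1 (Nat.find_min hex hj)
  refine ⟨Nat.find hex, ?_, fun hlt hQ => Nat.find_spec hex ⟨hlt, hQ⟩, fun j hj => (before hj).2⟩
  cases hk : Nat.find hex with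
  | zero => exact zero_le
  | succ k => exact natCast_succ_le_iff.2 (before (hk ▸ Nat.lt_succ_self k)).1

variable {G : Type*} [Group G] {S : Set G} {H : Bool → Subgroup G} {ρ : Bool → G → G}
  {g : ℕ → G} {N : ℕ∞} {j k : ℕ} {x : G}

/-- The product of the first `n` syllables of the sequence `g`. -/
def prefixProd (g : ℕ → G) (n : ℕ) : G := ((List.range n).map g).prod

theorem prefixProd_zero (g : ℕ → G) : prefixProd g 0 = 1 := rfl

theorem prefixProd_succ (g : ℕ → G) (n : ℕ) : prefixProd g (n + 1) = prefixProd g n * g n :=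
  List.prod_range_succ g n

theorem prefixProd_congr {g' : ℕ → G} (hk : k ≤ N) (h : ∀ i : ℕ, i < N → g i = g' i) :
    prefixProd g k = prefixProd g' k :=
  congrArg List.prod (List.map_congr_left fun i hi =>
    h i ((Nat.cast_lt.2 (List.mem_range.1 hi)).trans_le hk))

theorem inv_prefixProd_succ_mul (g : ℕ → G) (k : ℕ) (x : G) :
    (prefixProd g (k + 1))⁻¹ * x = (g k)⁻¹ * ((prefixProd g k)⁻¹ * x) := by
  rw [prefixProd_succ, mul_inv_rev, mul_assoc]

/-- The coset of a factor in which the `k`-th syllable is traversed. -/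
def syllableCoset (H : Bool → Subgroup G) (g : ℕ → G) (k : ℕ) : Set G :=
  prefixProd g k • (H (factorIdx k) : Set G)

/-- The gate map of `syllableCoset`. -/
def syllableProj (ρ : Bool → G → G) (g : ℕ → G) (k : ℕ) : G → G :=
  cosetProj ρ (factorIdx k) (prefixProd g k)

theorem mem_syllableCoset : x ∈ syllableCoset H g k ↔ (prefixProd g k)⁻¹ * x ∈ H (factorIdx k) :=
  mem_leftCoset_iff _

theorem prefixProd_mem_syllableCoset (H : Bool → Subgroup G) (g : ℕ → G) (k : ℕ) :
    prefixProd g k ∈ syllableCoset H g k := by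
  rw [mem_syllableCoset, inv_mul_cancel]
  exact one_mem _

theorem syllableProj_eq_prefixProd_iff :
    syllableProj ρ g k x = prefixProd g k ↔ ρ (factorIdx k) ((prefixProd g k)⁻¹ * x) = 1 :=
  mul_eq_left

namespace IsFreeSplitting

theorem syllableProj_of_mem (h : IsFreeSplitting H ρ) (hx : x ∈ syllableCoset H g k) :
    syllableProj ρ g k x = x := by
  rw [syllableProj, cosetProj, h.proj_of_mem (mem_syllableCoset.1 hx), mul_inv_cancel_left]

theorem range_syllableProj (h : IsFreeSplitting H ρ) (g : ℕ → G) (k : ℕ) :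
    range (syllableProj ρ g k) = syllableCoset H g k := by
  refine Subset.antisymm ?_ fun x hx => ⟨x, h.syllableProj_of_mem hx⟩
  rintro _ ⟨x, rfl⟩
  rw [mem_syllableCoset, syllableProj, cosetProj, inv_mul_cancel_left]
  exact h.proj_mem _ _

end IsFreeSplitting

/-- The first `N` terms of `g` are the syllables of a reduced word whose first syllable lies in
`H true` and is possibly trivial. -/
structure IsSyllableSeq (H : Bool → Subgroup G) (g : ℕ → G) (N : ℕ∞) : Prop where
  mem : ∀ i : ℕ, i < N → g i ∈ H (factorIdx i)
  ne_one : ∀ i : ℕ, 1 ≤ i → i < N → g i ≠ 1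

namespace IsSyllableSeq

theorem prefixProd_ne_succ (hg : IsSyllableSeq H g N) (hk : 1 ≤ k) (hkN : k < N) :
    prefixProd g k ≠ prefixProd g (k + 1) := by
  rw [prefixProd_succ, Ne, left_eq_mul]
  exact hg.ne_one k hk hkN

theorem proj_inv_prefixProd_succ (hg : IsSyllableSeq H g N) (h : IsFreeSplitting H ρ) (hk : k < N) :
    ρ (factorIdx k) ((prefixProd g (k + 1))⁻¹ * x) =
      (g k)⁻¹ * ρ (factorIdx k) ((prefixProd g k)⁻¹ * x) := by
  rw [inv_prefixProd_succ_mul, h.proj_mul (inv_mem (hg.mem k hk))]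

theorem syllableProj_eq_prefixProd_succ_iff (hg : IsSyllableSeq H g N) (h : IsFreeSplitting H ρ)
    (hk : k < N) : syllableProj ρ g k x = prefixProd g (k + 1) ↔
      ρ (factorIdx k) ((prefixProd g (k + 1))⁻¹ * x) = 1 := by
  rw [hg.proj_inv_prefixProd_succ h hk, inv_mul_eq_one, prefixProd_succ, eq_comm (a := g k)]
  exact mul_right_inj _

theorem syllableProj_of_mem_of_lt (hg : IsSyllableSeq H g N) (h : IsFreeSplitting H ρ)
    (hjk : j < k) (hk : k ≤ N) (hx : x ∈ syllableCoset H g j) :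
    syllableProj ρ g k x = prefixProd g k := by
  rw [syllableProj_eq_prefixProd_iff]
  induction k, hjk using Nat.le_induction with
  | base =>
    rw [inv_prefixProd_succ_mul]
    exact h.proj_not_of_mem
      (mul_mem (inv_mem (hg.mem j (natCast_succ_le_iff.1 hk))) (mem_syllableCoset.1 hx))
  | succ m hm ih =>
    have hmN := natCast_succ_le_iff.1 hk
    refine h.proj_not ?_
    rw [hg.proj_inv_prefixProd_succ h hmN, ih hmN.le, mul_one, inv_ne_one]
    exact hg.ne_one m (Nat.one_le_of_lt hm) hmN

theorem syllableProj_of_mem_of_gt (hg : IsSyllableSeq H g N) (h : IsFreeSplitting H ρ)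
    (hkj : k < j) (hj : j ≤ N) (hx : x ∈ syllableCoset H g j) :
    syllableProj ρ g k x = prefixProd g (k + 1) := by
  have hkN : k < N := (Nat.cast_lt.2 hkj).trans_le hj
  rw [hg.syllableProj_eq_prefixProd_succ_iff h hkN]
  obtain ⟨n, rfl⟩ := Nat.exists_eq_succ_of_ne_zero (Nat.ne_zero_of_lt hkj)
  clear hkN
  induction Nat.le_of_lt_succ hkj using Nat.decreasingInduction with
  | self => simpa [factorIdx] using h.proj_not_of_mem (mem_syllableCoset.1 hx)
  | of_succ m hm ih =>
    have hmN : ((m + 1 : ℕ) : ℕ∞) < N := (Nat.cast_lt.2 (Nat.succ_lt_succ hm)).trans_le hj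
    have hproj := ih (Nat.succ_lt_succ hm)
    rw [hg.proj_inv_prefixProd_succ h hmN, inv_mul_eq_one] at hproj
    have hproj' := h.proj_not (hproj ▸ hg.ne_one _ (Nat.le_add_left 1 m) hmN)
    rwa [factorIdx, Bool.not_not] at hproj'

theorem syllableProj_one (hg : IsSyllableSeq H g N) (h : IsFreeSplitting H ρ) (hk : k ≤ N) :
    syllableProj ρ g k 1 = prefixProd g k := by
  have hone : (1 : G) ∈ syllableCoset H g 0 := prefixProd_mem_syllableCoset H g 0
  obtain rfl | hk0 := Nat.eq_zero_or_pos k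
  · exact h.syllableProj_of_mem hone
  · exact hg.syllableProj_of_mem_of_lt h hk0 hk hone

theorem eq_prefixProd_of_syllableProj_eq (hg : IsSyllableSeq H g N) (h : IsFreeSplitting H ρ)
    (hk : k < N) (hproj : syllableProj ρ g k x = prefixProd g (k + 1))
    (hproj' : syllableProj ρ g (k + 1) x = prefixProd g (k + 1)) : x = prefixProd g (k + 1) := by
  rw [hg.syllableProj_eq_prefixProd_succ_iff h hk] at hproj
  rw [syllableProj_eq_prefixProd_iff] at hproj'
  refine (inv_mul_eq_one.1 (h.eq_one_of_proj_eq_one fun σ => ?_)).symm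
  obtain rfl | hσ := eq_or_ne σ (factorIdx k)
  · exact hproj
  · rwa [Bool.eq_not_of_ne hσ]

end IsSyllableSeq

namespace IsAdaptedSplitting

theorem isGateMap_syllableProj (h : IsAdaptedSplitting H ρ S) (g : ℕ → G) (k : ℕ) :
    IsGateMap (wordDist S) (syllableProj ρ g k) :=
  h.isGateMap_cosetProj _ _

theorem wordDist_one_eq_of_syllableProj_ne (h : IsAdaptedSplitting H ρ S)
    (hg : IsSyllableSeq H g N) (hk : k ≤ N) (hx : syllableProj ρ g k x ≠ prefixProd g k) :
    wordDist S 1 x = wordDist S 1 (prefixProd g k) +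
      wordDist S (prefixProd g k) (syllableProj ρ g k x) + wordDist S (syllableProj ρ g k x) x := by
  have hone := hg.syllableProj_one h.toIsFreeSplitting hk
  have := h.isGateMap_syllableProj g k 1 x (by rw [hone]; exact hx.symm)
  rwa [hone] at this

theorem wordDist_one_eq_of_mem_syllableCoset (h : IsAdaptedSplitting H ρ S)
    (hg : IsSyllableSeq H g N) (hk : k ≤ N) (hx : x ∈ syllableCoset H g k) :
    wordDist S 1 x = wordDist S 1 (prefixProd g k) + wordDist S (prefixProd g k) x := by
  have hd := h.isPseudoMetric
  obtain rfl | hne := eq_or_ne x (prefixProd g k)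
  · rw [hd.self, add_zero]
  · have hfix := h.syllableProj_of_mem hx
    have := h.wordDist_one_eq_of_syllableProj_ne hg hk (by rwa [hfix])
    rwa [hfix, hd.self, add_zero] at this

end IsAdaptedSplitting

end Syllables

section Itineraries

variable {G : Type*} [Group G] {S : Set G} {H : Bool → Subgroup G} {ρ : Bool → G → G}
  {g γ : ℕ → G} {N : ℕ∞} {t : ℕ → ℕ} {i k s : ℕ} {M : MorseGauge}

/-- The time interval `[t k, t (k + 1)]`, which is `[t N, ∞)` for `k = N`. -/
def visitTimes (N : ℕ∞) (t : ℕ → ℕ) (k : ℕ) : Set ℕ := {s | t k ≤ s ∧ (k < N → s ≤ t (k + 1))}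

/-- Times at which a path can reach the successive prefixes of a reduced word: only the first
syllable, being possibly trivial, can take no time. -/
structure IsTimetable (N : ℕ∞) (t : ℕ → ℕ) : Prop where
  zero : t 0 = 0
  mono : Monotone t
  lt_succ : ∀ k : ℕ, 1 ≤ k → k < N → t k < t (k + 1)

namespace IsTimetable

theorem le_add_one (ht : IsTimetable N t) (hi : i ≤ N) : i ≤ t i + 1 := by
  induction i with
  | zero => exact Nat.zero_le _
  | succ k ih =>
    have hkN := natCast_succ_le_iff.1 hi
    obtain rfl | hk := Nat.eq_zero_or_pos k
    · exact Nat.le_add_left _ _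
    · exact Nat.succ_le_succ ((ih hkN.le).trans (ht.lt_succ k hk hkN))

theorem exists_le_and_lt (ht : IsTimetable N t) (s : ℕ) :
    ∃ k : ℕ, k ≤ N ∧ t k ≤ s ∧ (k < N → s < t (k + 1)) := by
  obtain ⟨k, hk, hlt, hbefore⟩ := exists_first_not (N := N) (Q := fun k => t (k + 1) ≤ s) fun hN =>
    ⟨s + 1, by have := ht.le_add_one (i := s + 1 + 1) (hN ▸ le_top); omega⟩
  refine ⟨k, hk, ?_, fun hkN => not_le.1 (hlt hkN)⟩
  cases k with
  | zero => exact ht.zero.trans_le (Nat.zero_le s)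
  | succ j => exact hbefore j j.lt_succ_self

theorem exists_glue (ht : IsTimetable N t) {X : Type*} (f : ℕ → ℕ → X)
    (hf : ∀ k : ℕ, k < N → f k (t (k + 1)) = f (k + 1) (t (k + 1))) :
    ∃ γ : ℕ → X, ∀ k : ℕ, k ≤ N → ∀ s ∈ visitTimes N t k, γ s = f k s := by
  choose κ hκ hle hlt using ht.exists_le_and_lt
  refine ⟨fun s => f (κ s) s, fun k hk s ⟨hks, hsk⟩ => ?_⟩
  obtain hlt' | heq | hgt := lt_trichotomy (κ s) k
  · exact absurd ((ht.mono hlt').trans hks) (hlt s ((Nat.cast_lt.2 hlt').trans_le hk)).not_ge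
  · exact congrArg (f · s) heq
  · have hkN : (k : ℕ∞) < N := (Nat.cast_lt.2 hgt).trans_le (hκ s)
    have hs : t (k + 1) = s := ((ht.mono hgt).trans (hle s)).antisymm (hsk hkN)
    have hκs : κ s = k + 1 := by
      refine (Nat.succ_le_of_lt hgt).antisymm (not_lt.1 fun hgt' => ?_) |>.symm
      have hlt' := ht.lt_succ (k + 1) (Nat.le_add_left 1 k) ((Nat.cast_lt.2 hgt').trans_le (hκ s))
      exact (hlt'.trans_le ((ht.mono hgt').trans (hle s))).ne hs
    change f (κ s) s = f k s
    rw [hκs, ← hs, hf k hkN]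

end IsTimetable

/-- The path `γ` reaches the `i`-th prefix of `g` at time `t i`, and traverses the coset of the
`k`-th syllable between the times `t k` and `t (k + 1)`. If `N` is finite, it stays in the last
coset forever. -/
structure IsItinerary (H : Bool → Subgroup G) (g : ℕ → G) (N : ℕ∞) (t : ℕ → ℕ) (γ : ℕ → G) :
    Prop where
  zero : t 0 = 0
  mono : Monotone t
  apply_time : ∀ i : ℕ, i ≤ N → γ (t i) = prefixProd g i
  mem_coset : ∀ k : ℕ, k ≤ N → ∀ s ∈ visitTimes N t k, γ s ∈ syllableCoset H g k

namespace IsItinerary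

theorem apply_zero (hI : IsItinerary H g N t γ) : γ 0 = 1 := by
  have := hI.apply_time 0 zero_le
  rwa [hI.zero, prefixProd_zero] at this

theorem congr {g' : ℕ → G} (hI : IsItinerary H g N t γ) (h : ∀ i : ℕ, i < N → g i = g' i) :
    IsItinerary H g' N t γ where
  zero := hI.zero
  mono := hI.mono
  apply_time i hi := (hI.apply_time i hi).trans (prefixProd_congr hi h)
  mem_coset k hk s hs := by
    rw [mem_syllableCoset, ← prefixProd_congr hk h]
    exact mem_syllableCoset.1 (hI.mem_coset k hk s hs)

theorem wordDist_one (hI : IsItinerary H g N t γ) (hγ : IsGeodesicOnN (wordDist S) γ univ) (s : ℕ) :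
    wordDist S 1 (γ s) = s := by
  simpa [hI.apply_zero] using hγ 0 trivial s trivial

theorem wordDist_one_prefixProd (hI : IsItinerary H g N t γ)
    (hγ : IsGeodesicOnN (wordDist S) γ univ) (hk : k ≤ N) :
    wordDist S 1 (prefixProd g k) = t k := by
  rw [← hI.apply_time k hk, hI.wordDist_one hγ]

theorem isTimetable (hI : IsItinerary H g N t γ) (hg : IsSyllableSeq H g N) : IsTimetable N t where
  zero := hI.zero
  mono := hI.mono
  lt_succ k hk hkN := by
    refine (hI.mono k.le_succ).lt_of_ne fun h => hg.prefixProd_ne_succ hk hkN ?_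
    rw [← hI.apply_time k hkN.le, ← hI.apply_time (k + 1) (natCast_succ_le_iff.2 hkN), h]

theorem exists_mem_visitTimes (hI : IsItinerary H g N t γ) (hg : IsSyllableSeq H g N) (s : ℕ) :
    ∃ k : ℕ, k ≤ N ∧ s ∈ visitTimes N t k := by
  obtain ⟨k, hk, hks, hsk⟩ := (hI.isTimetable hg).exists_le_and_lt s
  exact ⟨k, hk, hks, fun hkN => (hsk hkN).le⟩

theorem time_mem_visitTimes (hI : IsItinerary H g N t γ) : t k ∈ visitTimes N t k :=
  ⟨le_rfl, fun _ => hI.mono k.le_succ⟩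

theorem time_succ_mem_visitTimes (hI : IsItinerary H g N t γ) : t (k + 1) ∈ visitTimes N t k :=
  ⟨hI.mono k.le_succ, fun _ => le_rfl⟩

theorem mapsTo_syllableProj (hI : IsItinerary H g N t γ) (hg : IsSyllableSeq H g N)
    (h : IsFreeSplitting H ρ) (hk : k ≤ N) :
    MapsTo (syllableProj ρ g k) (range γ) (γ '' visitTimes N t k) := by
  rintro _ ⟨s, rfl⟩
  obtain ⟨j, hj, hs⟩ := hI.exists_mem_visitTimes hg s
  have hmem := hI.mem_coset j hj s hs
  obtain hjk | rfl | hkj := lt_trichotomy j k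
  · rw [hg.syllableProj_of_mem_of_lt h hjk hk hmem, ← hI.apply_time k hk]
    exact mem_image_of_mem γ hI.time_mem_visitTimes
  · rw [h.syllableProj_of_mem hmem]
    exact mem_image_of_mem γ hs
  · rw [hg.syllableProj_of_mem_of_gt h hkj hj hmem,
      ← hI.apply_time (k + 1) ((Nat.cast_le.2 hkj).trans hj)]
    exact mem_image_of_mem γ hI.time_succ_mem_visitTimes

theorem exists_branch (hI : IsItinerary H g N t γ) (hg : IsSyllableSeq H g N)
    (h : IsAdaptedSplitting H ρ S) (hγ : IsGeodesicOnN (wordDist S) γ univ) (x : G) :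
    ∃ k : ℕ, k ≤ N ∧ (k < N → syllableProj ρ g k x ≠ prefixProd g (k + 1)) ∧
      ∀ j < k, syllableProj ρ g j x = prefixProd g (j + 1) := by
  refine exists_first_not fun hN => ?_
  by_contra! hall
  obtain ⟨k, hk⟩ := exists_nat_gt (wordDist S 1 x)
  have hkN : ((k + 1 : ℕ) : ℕ∞) < N := hN ▸ ENat.natCast_lt_top _
  have hd := h.isPseudoMetric
  have hsplit := h.wordDist_one_eq_of_syllableProj_ne hg hkN.le
    (by rw [hall]; exact (hg.prefixProd_ne_succ (Nat.le_add_left 1 k) hkN).symm)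
  rw [hI.wordDist_one_prefixProd hγ hkN.le] at hsplit
  have htime : (k : ℝ) ≤ t (k + 1) := by
    exact_mod_cast Nat.succ_le_succ_iff.1 ((hI.isTimetable hg).le_add_one hkN.le)
  linarith [hd.nonneg (prefixProd g (k + 1)) (syllableProj ρ g (k + 1) x),
    hd.nonneg (syllableProj ρ g (k + 1) x) x]

theorem isMorseIn_range (hI : IsItinerary H g N t γ) (hg : IsSyllableSeq H g N)
    (h : IsAdaptedSplitting H ρ S) (hγ : IsGeodesicOnN (wordDist S) γ univ)
    (hM : ∀ k : ℕ, k ≤ N → IsMorseIn (wordDist S) (syllableCoset H g k) M (γ '' visitTimes N t k)) :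
    IsMorseIn (wordDist S) univ (concatGauge M) (range γ) := by
  refine .of_isGateMap h.isPseudoMetric fun x => ?_
  obtain ⟨k, hk, hafter, hbefore⟩ := hI.exists_branch hg h hγ x
  refine ⟨_, _, h.isGateMap_syllableProj g k, image_subset_range γ (visitTimes N t k),
    hI.mapsTo_syllableProj hg h.toIsFreeSplitting hk, ?_, ?_⟩
  · rintro _ ⟨s, rfl⟩ heq
    obtain ⟨j, hj, hs⟩ := hI.exists_mem_visitTimes hg s
    have hmem := hI.mem_coset j hj s hs
    obtain hjk | rfl | hkj := lt_trichotomy j k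
    · right
      rw [hg.syllableProj_of_mem_of_lt h.toIsFreeSplitting hjk hk hmem] at heq
      obtain ⟨m, rfl⟩ := Nat.exists_eq_succ_of_ne_zero (Nat.ne_zero_of_lt hjk)
      rw [← heq, hg.eq_prefixProd_of_syllableProj_eq h.toIsFreeSplitting
        (natCast_succ_le_iff.1 hk) (hbefore m m.lt_succ_self) heq.symm]
    · exact .inl (h.syllableProj_of_mem hmem)
    · rw [hg.syllableProj_of_mem_of_gt h.toIsFreeSplitting hkj hj hmem] at heq
      exact absurd heq.symm (hafter ((Nat.cast_lt.2 hkj).trans_le hj))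
  · rw [h.range_syllableProj]
    exact hM k hk

theorem isMorseIn_visit (hI : IsItinerary H g N t γ) (hg : IsSyllableSeq H g N)
    (h : IsAdaptedSplitting H ρ S) (hM : IsMorseIn (wordDist S) univ M (range γ)) (hk : k ≤ N) :
    IsMorseIn (wordDist S) (syllableCoset H g k) M (γ '' visitTimes N t k) :=
  hM.of_retraction (subset_univ _) (image_subset_range _ _)
    ((h.isGateMap_syllableProj g k).dist_map_le h.isPseudoMetric)
    (fun _ => h.syllableProj_of_mem) (hI.mapsTo_syllableProj hg h.toIsFreeSplitting hk)

end IsItinerary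

end Itineraries

section Concatenation

variable {G : Type*} [Group G] {S : Set G} {H : Bool → Subgroup G} {ρ : Bool → G → G}
  {g γ : ℕ → G} {N : ℕ∞} {t ℓ : ℕ → ℕ} {p : ℕ → ℕ → G} {k : ℕ} {M : MorseGauge}

/-- The domain of the `k`-th piece of a path: the piece has length `ℓ k`, except that the piece with
index `k = N` is a ray. -/
def pieceTimes (N : ℕ∞) (ℓ : ℕ → ℕ) (k : ℕ) : Set ℕ := {j | k < N → j ≤ ℓ k}

/-- A geodesic in `K` that starts at `1` and whose trace on `J` is `M`-Morse in `K`. -/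
structure IsMorsePiece (d : G → G → ℝ) (K : Set G) (M : MorseGauge) (p : ℕ → G) (J : Set ℕ) :
    Prop where
  zero : p 0 = 1
  mem : ∀ j ∈ J, p j ∈ K
  geodesic : IsGeodesicOnN d p J
  morse : IsMorseIn d K M (p '' J)

theorem visitTimes_eq_image (ht : t (k + 1) = t k + ℓ k) :
    visitTimes N t k = (t k + ·) '' pieceTimes N ℓ k := by
  ext s
  constructor
  · rintro ⟨hks, hsk⟩
    obtain ⟨j, rfl⟩ := Nat.exists_eq_add_of_le hks
    exact ⟨j, fun hkN => by have := hsk hkN; omega, rfl⟩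
  · rintro ⟨j, hj, rfl⟩
    exact ⟨Nat.le_add_right _ _, fun hkN => ht ▸ Nat.add_le_add_left (hj hkN) _⟩

theorem isMorseIn_visit_iff (ht : t (k + 1) = t k + ℓ k) {q : ℕ → G}
    (hγ : ∀ j ∈ pieceTimes N ℓ k, γ (t k + j) = prefixProd g k * q j) :
    IsMorseIn (wordDist S) (syllableCoset H g k) M (γ '' visitTimes N t k) ↔
      IsMorseIn (wordDist S) (H (factorIdx k)) M (q '' pieceTimes N ℓ k) := by
  have himage : γ '' visitTimes N t k = (prefixProd g k * ·) '' (q '' pieceTimes N ℓ k) := by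
    rw [visitTimes_eq_image ht, image_image, image_image]
    exact image_congr hγ
  rw [himage]
  exact isMorseIn_image_iff (wordDist_mul_left _) (r := ((prefixProd g k)⁻¹ * ·))
    (inv_mul_cancel_left _)

namespace IsMorsePiece

variable {K : Set G} {q : ℕ → G} {J : Set ℕ} {j : ℕ}

theorem wordDist_mul (hq : IsMorsePiece (wordDist S) K M q J) (h0 : 0 ∈ J) (hj : j ∈ J) (v : G) :
    wordDist S v (v * q j) = j := by
  simpa [hq.zero, ← wordDist_mul_left v 1] using hq.geodesic 0 h0 j hj

end IsMorsePiece

theorem zero_mem_pieceTimes : 0 ∈ pieceTimes N ℓ k := fun _ => Nat.zero_le _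

theorem pieceTimes_of_lt (hk : k < N) : pieceTimes N ℓ k = Iic (ℓ k) :=
  ext fun _ => forall_prop_of_true hk

theorem pieceTimes_natCast (n : ℕ) : pieceTimes n ℓ n = univ :=
  eq_univ_of_forall fun _ h => absurd h (lt_irrefl _)

theorem self_mem_pieceTimes : ℓ k ∈ pieceTimes N ℓ k := fun _ => le_rfl

/-- Geodesic pieces realizing a combinatorial Morse geodesic with syllables `g`: for `k < N` the
`k`-th piece is a segment of length `ℓ k` from `1` to `g k`, and for `k = N` it is a ray. -/
structure IsPieceSeq (S : Set G) (H : Bool → Subgroup G) (M : MorseGauge) (g : ℕ → G) (N : ℕ∞)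
    (ℓ : ℕ → ℕ) (p : ℕ → ℕ → G) : Prop where
  piece : ∀ k : ℕ, k ≤ N →
    IsMorsePiece (wordDist S) (H (factorIdx k)) M (p k) (pieceTimes N ℓ k)
  last : ∀ k : ℕ, k < N → p k (ℓ k) = g k

theorem IsItinerary.isPieceSeq (hI : IsItinerary H g N t γ) (hg : IsSyllableSeq H g N)
    (h : IsAdaptedSplitting H ρ S) (hγ : IsGeodesicOnN (wordDist S) γ univ)
    (hM : IsMorseIn (wordDist S) univ M (range γ)) :
    IsPieceSeq S H M g N (fun k => t (k + 1) - t k)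
      (fun k j => (prefixProd g k)⁻¹ * γ (t k + j)) := by
  have hℓ (k : ℕ) : t (k + 1) = t k + (t (k + 1) - t k) :=
    (Nat.add_sub_of_le (hI.mono k.le_succ)).symm
  refine ⟨fun k hk => ⟨?_, fun j hj => ?_, fun i _ j _ => ?_, ?_⟩, fun k hk => ?_⟩
  · rw [add_zero, hI.apply_time k hk, inv_mul_cancel]
  · refine mem_syllableCoset.1 (hI.mem_coset k hk _ ?_)
    rw [visitTimes_eq_image (ℓ := fun k => t (k + 1) - t k) (hℓ k)]
    exact mem_image_of_mem _ hj
  · rw [wordDist_mul_left, hγ _ trivial _ trivial]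
    push_cast
    rw [add_sub_add_left_eq_sub]
  · exact (isMorseIn_visit_iff (hℓ k) fun j _ => (mul_inv_cancel_left _ _).symm).1
      (hI.isMorseIn_visit hg h hM hk)
  · rw [← hℓ, hI.apply_time _ (natCast_succ_le_iff.2 hk), prefixProd_succ, inv_mul_cancel_left]

/-- The time at which a concatenation of pieces of lengths `ℓ` reaches the `k`-th piece. -/
def arrivalTime (ℓ : ℕ → ℕ) (k : ℕ) : ℕ := ∑ j ∈ Finset.range k, ℓ j

theorem arrivalTime_succ (ℓ : ℕ → ℕ) (k : ℕ) : arrivalTime ℓ (k + 1) = arrivalTime ℓ k + ℓ k :=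
  Finset.sum_range_succ ℓ k

/-- The path `γ` is the concatenation of the translates of the pieces `p k` by the prefixes
of `g`. -/
def IsConcat (g : ℕ → G) (N : ℕ∞) (ℓ : ℕ → ℕ) (p : ℕ → ℕ → G) (γ : ℕ → G) : Prop :=
  ∀ k : ℕ, k ≤ N → ∀ j ∈ pieceTimes N ℓ k, γ (arrivalTime ℓ k + j) = prefixProd g k * p k j

namespace IsPieceSeq

theorem isTimetable (hp : IsPieceSeq S H M g N ℓ p) (hg : IsSyllableSeq H g N) :
    IsTimetable N (arrivalTime ℓ) where
  zero := rfl
  mono := monotone_nat_of_le_succ fun k => arrivalTime_succ ℓ k ▸ Nat.le_add_right _ _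
  lt_succ k hk hkN := by
    rw [arrivalTime_succ]
    refine Nat.lt_add_of_pos_right (Nat.pos_of_ne_zero fun h0 => hg.ne_one k hk hkN ?_)
    rw [← hp.last k hkN, h0, (hp.piece k hkN.le).zero]

theorem exists_of_segments {ζ : ℕ → ℕ → G}
    (hseg : ∀ k : ℕ, k < N → ∃ n q,
      IsMorsePiece (wordDist S) (H (factorIdx k)) M q (Iic n) ∧ q n = g k)
    (hray : ∀ n : ℕ, N = n → IsMorsePiece (wordDist S) (H (factorIdx n)) M (ζ n) univ) :
    ∃ ℓ p, IsPieceSeq S H M g N ℓ p ∧ ∀ n : ℕ, N = n → p n = ζ n := by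
  classical
  choose! ℓ q hq hqg using hseg
  refine ⟨ℓ, fun k => if k < N then q k else ζ k, ⟨fun k hk => ?_, fun k hk => ?_⟩, fun n hn => ?_⟩
  · obtain hlt | rfl := hk.lt_or_eq
    · rw [if_pos hlt, pieceTimes_of_lt hlt]
      exact hq k hlt
    · rw [if_neg (lt_irrefl _), pieceTimes_natCast]
      exact hray k rfl
  · rw [if_pos hk]
    exact hqg k hk
  · exact if_neg hn.not_gt

theorem exists_isConcat (hp : IsPieceSeq S H M g N ℓ p) (hg : IsSyllableSeq H g N) :
    ∃ γ, IsConcat g N ℓ p γ := by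
  obtain ⟨γ, hγ⟩ := (hp.isTimetable hg).exists_glue
    (fun k s => prefixProd g k * p k (s - arrivalTime ℓ k)) fun k hk => by
      rw [arrivalTime_succ, Nat.add_sub_cancel_left, Nat.sub_self, hp.last k hk,
        (hp.piece _ (natCast_succ_le_iff.2 hk)).zero, mul_one, prefixProd_succ]
  refine ⟨γ, fun k hk j hj => ?_⟩
  have hmem : arrivalTime ℓ k + j ∈ visitTimes N (arrivalTime ℓ) k := by
    rw [visitTimes_eq_image (arrivalTime_succ ℓ k)]
    exact mem_image_of_mem _ hj
  rw [hγ k hk _ hmem, Nat.add_sub_cancel_left]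

theorem isItinerary (hp : IsPieceSeq S H M g N ℓ p) (hg : IsSyllableSeq H g N)
    (hγ : IsConcat g N ℓ p γ) : IsItinerary H g N (arrivalTime ℓ) γ where
  zero := rfl
  mono := (hp.isTimetable hg).mono
  apply_time k hk := by
    rw [← add_zero (arrivalTime ℓ k), hγ k hk 0 zero_mem_pieceTimes, (hp.piece k hk).zero, mul_one]
  mem_coset k hk s hs := by
    rw [visitTimes_eq_image (arrivalTime_succ ℓ k)] at hs
    obtain ⟨j, hj, rfl⟩ := hs
    rw [hγ k hk j hj, mem_syllableCoset, inv_mul_cancel_left]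
    exact (hp.piece k hk).mem j hj

theorem wordDist_one_mul (hp : IsPieceSeq S H M g N ℓ p) (h : IsAdaptedSplitting H ρ S)
    (hg : IsSyllableSeq H g N) (hk : k ≤ N) {j : ℕ} (hj : j ∈ pieceTimes N ℓ k) :
    wordDist S 1 (prefixProd g k * p k j) = arrivalTime ℓ k + j := by
  have hadd {k j : ℕ} (hk : k ≤ N) (hj : j ∈ pieceTimes N ℓ k) :
      wordDist S 1 (prefixProd g k * p k j) = wordDist S 1 (prefixProd g k) + j := by
    rw [h.wordDist_one_eq_of_mem_syllableCoset hg hk,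
      (hp.piece k hk).wordDist_mul zero_mem_pieceTimes hj]
    rw [mem_syllableCoset, inv_mul_cancel_left]
    exact (hp.piece k hk).mem j hj
  rw [hadd hk hj, add_left_inj]
  clear hj
  induction k with
  | zero => rw [prefixProd_zero, h.isPseudoMetric.self, arrivalTime, Finset.sum_range_zero,
      Nat.cast_zero]
  | succ k ih =>
    have hkN := natCast_succ_le_iff.1 hk
    rw [prefixProd_succ, ← hp.last k hkN, hadd hkN.le self_mem_pieceTimes, ih hkN.le,
      arrivalTime_succ, Nat.cast_add]

theorem isGeodesicOnN (hp : IsPieceSeq S H M g N ℓ p) (h : IsAdaptedSplitting H ρ S)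
    (hg : IsSyllableSeq H g N) (hγ : IsConcat g N ℓ p γ) :
    IsGeodesicOnN (wordDist S) γ univ := by
  have exists_eq (s : ℕ) : ∃ k : ℕ, k ≤ N ∧ ∃ j, s = arrivalTime ℓ k + j ∧
      j ∈ pieceTimes N ℓ k ∧ j + 1 ∈ pieceTimes N ℓ k := by
    obtain ⟨k, hk, hks, hsk⟩ := (hp.isTimetable hg).exists_le_and_lt s
    obtain ⟨j, rfl⟩ := Nat.exists_eq_add_of_le hks
    have hj : j + 1 ∈ pieceTimes N ℓ k := fun hkN =>
      Nat.lt_of_add_lt_add_left (arrivalTime_succ ℓ k ▸ hsk hkN)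
    exact ⟨k, hk, j, rfl, fun hkN => (Nat.le_succ j).trans (hj hkN), hj⟩
  refine isGeodesicOnN_univ_of_dist_succ_le h.isPseudoMetric (o := 1) (fun s => ?_) fun s => ?_
  · obtain ⟨k, hk, j, rfl, hj, -⟩ := exists_eq s
    rw [hγ k hk j hj, hp.wordDist_one_mul h hg hk hj, Nat.cast_add]
  · obtain ⟨k, hk, j, rfl, hj, hj'⟩ := exists_eq s
    rw [hγ k hk j hj, add_assoc, hγ k hk _ hj', wordDist_mul_left,
      (hp.piece k hk).geodesic j hj _ hj']
    simp

theorem isMorseIn_range (hp : IsPieceSeq S H M g N ℓ p) (h : IsAdaptedSplitting H ρ S)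
    (hg : IsSyllableSeq H g N) (hγ : IsConcat g N ℓ p γ) :
    IsMorseIn (wordDist S) univ (concatGauge M) (range γ) :=
  (hp.isItinerary hg hγ).isMorseIn_range hg h (hp.isGeodesicOnN h hg hγ) fun k hk =>
    (isMorseIn_visit_iff (arrivalTime_succ ℓ k) (hγ k hk)).2 (hp.piece k hk).morse

end IsPieceSeq

end Concatenation

section GeodesicRays

variable {X : Type*} {d : X → X → ℝ} {γ γ' : ℕ → X} {M : MorseGauge}

theorem IsGeodesicOnN.injective (hd : IsPseudoMetric d) (hγ : IsGeodesicOnN d γ univ) :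
    Function.Injective γ := by
  intro i j hij
  have := hγ i trivial j trivial
  rw [hij, hd.self, eq_comm, abs_eq_zero, sub_eq_zero] at this
  exact_mod_cast this

theorem IsMorseIn.dist_le_of_frequently_eq (hd : IsPseudoMetric d)
    (hγ : IsGeodesicOnN d γ univ) (hγ' : IsGeodesicOnN d γ' univ)
    (hM : IsMorseIn d univ M (range γ)) (h0 : γ 0 = γ' 0) (heq : ∀ s, ∃ m ≥ s, γ m = γ' m) (s : ℕ) :
    d (γ s) (γ' s) ≤ 2 * M 1 0 := by
  obtain ⟨m, hsm, hm⟩ := heq s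
  have hq : IsQGOnN d 1 0 γ' (Icc 0 m) := fun i _ j _ => by simp [hγ' i trivial j trivial]
  obtain ⟨_, ⟨j, rfl⟩, hj⟩ := hM 1 0 le_rfl le_rfl γ' 0 m m.zero_le (mapsTo_univ _ _) hq
    ⟨0, h0⟩ ⟨m, hm⟩ s ⟨s.zero_le, hsm⟩
  have hs := hγ' 0 trivial s trivial
  have hj' := hγ 0 trivial j trivial
  have hsj : |(j : ℝ) - s| ≤ d (γ' s) (γ j) := by
    rw [Nat.cast_zero, zero_sub, abs_neg, Nat.abs_cast] at hs hj'
    rw [abs_sub_le_iff]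
    constructor
    · linarith [hd.triangle (γ 0) (γ' s) (γ j), h0 ▸ hs]
    · linarith [hd.triangle (γ 0) (γ j) (γ' s), h0 ▸ hs, hd.comm (γ j) (γ' s)]
  rw [← hγ j trivial s trivial] at hsj
  linarith [hd.triangle (γ s) (γ j) (γ' s), hd.comm (γ s) (γ j), hd.comm (γ j) (γ' s)]

end GeodesicRays

section Uniqueness

open Filter

variable {G : Type*} [Group G] {S : Set G} {H : Bool → Subgroup G} {ρ : Bool → G → G}
  {g g' γ γ' : ℕ → G} {N N' : ℕ∞} {t t' : ℕ → ℕ} {k : ℕ} {C : ℝ}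

namespace IsItinerary

theorem syllableProj_of_time_lt (hI : IsItinerary H g N t γ) (hg : IsSyllableSeq H g N)
    (h : IsFreeSplitting H ρ) (hk : k < N) {s : ℕ} (hs : t (k + 1) < s) :
    syllableProj ρ g k (γ s) = prefixProd g (k + 1) := by
  obtain ⟨j, hj, hjs⟩ := hI.exists_mem_visitTimes hg s
  have hkj : k < j := by
    by_contra! hjk
    exact (hjs.2 ((Nat.cast_le.2 hjk).trans_lt hk)).not_gt
      ((hI.mono (Nat.succ_le_succ hjk)).trans_lt hs)
  exact hg.syllableProj_of_mem_of_gt h hkj hj (hI.mem_coset j hj s hjs)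

theorem eventually_syllableProj_eq (hI : IsItinerary H g N t γ) (hg : IsSyllableSeq H g N)
    (h : IsAdaptedSplitting H ρ S) (hγ : IsGeodesicOnN (wordDist S) γ univ)
    (hC : ∀ s, wordDist S (γ s) (γ' s) ≤ C) (hk : k < N) :
    ∀ᶠ s in atTop, syllableProj ρ g k (γ' s) = prefixProd g (k + 1) := by
  obtain ⟨m, hm⟩ := exists_nat_gt C
  filter_upwards [eventually_gt_atTop (t (k + 1) + m)] with s hs
  have hproj := hI.syllableProj_of_time_lt hg h.toIsFreeSplitting hk
    (Nat.lt_of_le_of_lt (Nat.le_add_right _ m) hs)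
  by_contra hne
  have hdist := (h.isGateMap_syllableProj g k).dist_left_le h.isPseudoMetric
    (x := γ s) (y := γ' s) (by rw [hproj]; exact Ne.symm hne)
  rw [hproj, ← hI.apply_time _ (natCast_succ_le_iff.2 hk), hγ s trivial _ trivial] at hdist
  have hs' : (t (k + 1) + m : ℝ) < s := by exact_mod_cast hs
  linarith [hC s, le_abs_self ((s : ℝ) - t (k + 1))]

theorem le_and_prefixProd_eq (hI : IsItinerary H g N t γ) (hI' : IsItinerary H g' N' t' γ')
    (hg : IsSyllableSeq H g N) (hg' : IsSyllableSeq H g' N') (h : IsAdaptedSplitting H ρ S)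
    (hγ : IsGeodesicOnN (wordDist S) γ univ) (hγ' : IsGeodesicOnN (wordDist S) γ' univ)
    (hC : ∀ s, wordDist S (γ s) (γ' s) ≤ C) (hk : k ≤ N) :
    k ≤ N' ∧ prefixProd g k = prefixProd g' k := by
  induction k with
  | zero => exact ⟨zero_le, rfl⟩
  | succ k ih =>
    have hkN := natCast_succ_le_iff.1 hk
    obtain ⟨hkN', heq⟩ := ih hkN.le
    have hproj := hI.eventually_syllableProj_eq hg h hγ hC hkN
    have hsame (x : G) : syllableProj ρ g k x = syllableProj ρ g' k x := by
      rw [syllableProj, syllableProj, heq]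
    obtain hlt | hNk := hkN'.lt_or_eq
    · refine ⟨natCast_succ_le_iff.2 hlt, ?_⟩
      obtain ⟨s, hs, hs'⟩ := (hproj.and (eventually_gt_atTop (t' (k + 1)))).exists
      rw [← hs, hsame, hI'.syllableProj_of_time_lt hg' h.toIsFreeSplitting hlt hs']
    · have hconst : ∀ᶠ s in atTop, γ' s = prefixProd g (k + 1) := by
        filter_upwards [hproj, eventually_ge_atTop (t' k)] with s hs hs'
        rw [← hs, hsame, h.syllableProj_of_mem]
        exact hI'.mem_coset k hkN' s ⟨hs', fun hlt => absurd hNk hlt.ne⟩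
      obtain ⟨s, hs, hs'⟩ := (hconst.and (tendsto_add_atTop_nat 1 |>.eventually hconst)).exists
      exact absurd (hγ'.injective h.isPseudoMetric (hs.trans hs'.symm)) (Nat.ne_add_one s)

theorem length_eq (hI : IsItinerary H g N t γ) (hI' : IsItinerary H g' N' t' γ')
    (hg : IsSyllableSeq H g N) (hg' : IsSyllableSeq H g' N') (h : IsAdaptedSplitting H ρ S)
    (hγ : IsGeodesicOnN (wordDist S) γ univ) (hγ' : IsGeodesicOnN (wordDist S) γ' univ)
    (hC : ∀ s, wordDist S (γ s) (γ' s) ≤ C) : N = N' := by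
  have hC' (s : ℕ) : wordDist S (γ' s) (γ s) ≤ C := (h.isPseudoMetric.comm _ _).trans_le (hC s)
  refine le_antisymm ?_ ?_ <;> refine ENat.forall_natCast_le_iff_le.1 fun k hk => ?_
  · exact (hI.le_and_prefixProd_eq hI' hg hg' h hγ hγ' hC hk).1
  · exact (hI'.le_and_prefixProd_eq hI hg' hg h hγ' hγ hC' hk).1

theorem syllable_eq (hI : IsItinerary H g N t γ) (hI' : IsItinerary H g' N' t' γ')
    (hg : IsSyllableSeq H g N) (hg' : IsSyllableSeq H g' N') (h : IsAdaptedSplitting H ρ S)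
    (hγ : IsGeodesicOnN (wordDist S) γ univ) (hγ' : IsGeodesicOnN (wordDist S) γ' univ)
    (hC : ∀ s, wordDist S (γ s) (γ' s) ≤ C) (hk : k < N) : g k = g' k := by
  have hsucc := hI.le_and_prefixProd_eq hI' hg hg' h hγ hγ' hC (natCast_succ_le_iff.2 hk)
  rw [prefixProd_succ, prefixProd_succ,
    (hI.le_and_prefixProd_eq hI' hg hg' h hγ hγ' hC hk.le).2] at hsucc
  exact mul_left_cancel hsucc.2

theorem time_eq (hI : IsItinerary H g N t γ) (hI' : IsItinerary H g' N' t' γ')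
    (hγ : IsGeodesicOnN (wordDist S) γ univ) (hγ' : IsGeodesicOnN (wordDist S) γ' univ)
    (hk : k ≤ N) (hk' : k ≤ N') (heq : prefixProd g k = prefixProd g' k) : t k = t' k := by
  have := (hI.wordDist_one_prefixProd hγ hk).symm.trans
    ((congrArg _ heq).trans (hI'.wordDist_one_prefixProd hγ' hk'))
  exact_mod_cast this

end IsItinerary

end Uniqueness

section Existence

open scoped Pointwise

variable {G : Type*} [Group G] {S : Set G} {H : Bool → Subgroup G} {ρ : Bool → G → G} {γ : ℕ → G}
  {k s : ℕ}

theorem exists_forall_lt_and_not (P : ℕ → Prop) :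
    ∃ N : ℕ∞, (∀ k : ℕ, k < N → P k) ∧ ∀ k : ℕ, k = N → ¬P k := by
  classical
  by_cases hP : ∃ k, ¬P k
  · refine ⟨Nat.find hP, fun k hk => not_not.1 (Nat.find_min hP (Nat.cast_lt.1 hk)), ?_⟩
    intro k hk
    rw [Nat.cast_inj.1 hk]
    exact Nat.find_spec hP
  · exact ⟨⊤, fun k _ => not_not.1 (not_exists.1 hP k),
      fun k hk => absurd hk (ENat.natCast_ne_top k)⟩

/-- The time at which the path `γ` leaves the `k`-th coset. If it stays in that coset forever, then
the infimum of the empty set is `0`, and all later exit times have the same value. -/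
noncomputable def exitTime (H : Bool → Subgroup G) (γ : ℕ → G) : ℕ → ℕ
  | 0 => 0
  | k + 1 => exitTime H γ k +
      sInf {j | γ (exitTime H γ k + j + 1) ∉ γ (exitTime H γ k) • (H (factorIdx k) : Set G)}

/-- The `k`-th coset visited by the path `γ`. -/
def exitCoset (H : Bool → Subgroup G) (γ : ℕ → G) (k : ℕ) : Set G :=
  γ (exitTime H γ k) • (H (factorIdx k) : Set G)

/-- The syllables read along the path `γ`. -/
noncomputable def exitSyllable (H : Bool → Subgroup G) (γ : ℕ → G) (k : ℕ) : G :=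
  (γ (exitTime H γ k))⁻¹ * γ (exitTime H γ (k + 1))

/-- The path `γ` leaves the `k`-th coset that it visits. -/
def LeavesCoset (H : Bool → Subgroup G) (γ : ℕ → G) (k : ℕ) : Prop :=
  ∃ j, γ (exitTime H γ k + j + 1) ∉ exitCoset H γ k

theorem mem_exitCoset_iff {x : G} :
    x ∈ exitCoset H γ k ↔ (γ (exitTime H γ k))⁻¹ * x ∈ H (factorIdx k) :=
  mem_leftCoset_iff _

theorem prefixProd_exitSyllable (h0 : γ 0 = 1) (k : ℕ) :
    prefixProd (exitSyllable H γ) k = γ (exitTime H γ k) := by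
  induction k with
  | zero => rw [prefixProd_zero, exitTime, h0]
  | succ k ih => rw [prefixProd_succ, ih, exitSyllable, mul_inv_cancel_left]

theorem monotone_exitTime (H : Bool → Subgroup G) (γ : ℕ → G) : Monotone (exitTime H γ) :=
  monotone_nat_of_le_succ fun _ => Nat.le_add_right _ _

theorem apply_mem_exitCoset (hks : exitTime H γ k ≤ s)
    (hsk : LeavesCoset H γ k → s ≤ exitTime H γ (k + 1)) : γ s ∈ exitCoset H γ k := by
  obtain ⟨j, rfl⟩ := Nat.exists_eq_add_of_le hks
  cases j with
  | zero =>
    rw [mem_exitCoset_iff, add_zero, inv_mul_cancel]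
    exact one_mem _
  | succ j =>
    by_contra hj
    have hle := hsk ⟨j, hj⟩
    have hinf := Nat.sInf_le (s := {j | γ (exitTime H γ k + j + 1) ∉ exitCoset H γ k}) hj
    have : exitTime H γ k + (j + 1) ≤ exitTime H γ k + j :=
      hle.trans (Nat.add_le_add_left hinf _)
    omega

namespace LeavesCoset

theorem notMem (hk : LeavesCoset H γ k) : γ (exitTime H γ (k + 1) + 1) ∉ exitCoset H γ k :=
  Nat.sInf_mem hk

theorem apply_exitTime_succ_mem (h : IsAdaptedSplitting H ρ S)
    (hγ : IsGeodesicOnN (wordDist S) γ univ) (hk : LeavesCoset H γ k) :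
    γ (exitTime H γ (k + 1) + 1) ∈ exitCoset H γ (k + 1) := by
  obtain ⟨τ, hτ⟩ := h.exists_mem_factor_of_wordDist_eq_one
    (x := γ (exitTime H γ (k + 1))) (y := γ (exitTime H γ (k + 1) + 1))
    (by simpa using hγ (exitTime H γ (k + 1)) trivial (exitTime H γ (k + 1) + 1) trivial)
  have hne : τ ≠ factorIdx k := by
    rintro rfl
    have hmem : γ (exitTime H γ (k + 1)) ∈ exitCoset H γ k :=
      apply_mem_exitCoset (monotone_exitTime H γ k.le_succ) fun _ => le_rfl
    refine hk.notMem (mem_exitCoset_iff.2 ?_)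
    simpa only [mul_assoc, mul_inv_cancel_left] using mul_mem (mem_exitCoset_iff.1 hmem) hτ
  rw [mem_exitCoset_iff, factorIdx, ← Bool.eq_not_of_ne hne]
  exact hτ

theorem exitTime_lt_succ (h : IsAdaptedSplitting H ρ S) (hγ : IsGeodesicOnN (wordDist S) γ univ)
    (hk : LeavesCoset H γ k) (hk' : LeavesCoset H γ (k + 1)) :
    exitTime H γ (k + 1) < exitTime H γ (k + 2) := by
  refine (monotone_exitTime H γ (k + 1).le_succ).lt_of_ne fun heq => hk'.notMem ?_
  rw [← heq]
  exact hk.apply_exitTime_succ_mem h hγ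

end LeavesCoset

theorem exists_isItinerary (h : IsAdaptedSplitting H ρ S) (h0 : γ 0 = 1)
    (hγ : IsGeodesicOnN (wordDist S) γ univ) :
    ∃ g N t, IsSyllableSeq H g N ∧ IsItinerary H g N t γ := by
  obtain ⟨N, hlt, heq⟩ := exists_forall_lt_and_not (LeavesCoset H γ)
  refine ⟨exitSyllable H γ, N, exitTime H γ, ⟨fun k _ => ?_, fun k hk hkN hone => ?_⟩, rfl,
    monotone_exitTime H γ, fun k _ => (prefixProd_exitSyllable h0 k).symm, fun k hk s hs => ?_⟩
  · exact mem_exitCoset_iff.1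
      (apply_mem_exitCoset (monotone_exitTime H γ k.le_succ) fun _ => le_rfl)
  · obtain ⟨k, rfl⟩ := Nat.exists_eq_add_of_le' hk
    have hlt' := (hlt k ((Nat.cast_lt.2 k.lt_succ_self).trans hkN)).exitTime_lt_succ h hγ
      (hlt (k + 1) hkN)
    exact hlt'.ne (hγ.injective h.isPseudoMetric (inv_mul_eq_one.1 hone))
  · rw [syllableCoset, prefixProd_exitSyllable h0]
    exact apply_mem_exitCoset hs.1 fun hleaves =>
      hs.2 (hk.lt_of_ne fun hkN => heq k hkN hleaves)

end Existence

section FactorPieces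

theorem isEquivalence_bounded_dist {X : Type*} {d : X → X → ℝ} (hd : IsPseudoMetric d) (o : X) :
    Equivalence fun γ γ' : MRayN d o => ∃ C, ∀ i, d (γ.1 i) (γ'.1 i) ≤ C where
  refl _ := ⟨0, fun _ => (hd.self _).le⟩
  symm := fun ⟨C, hC⟩ => ⟨C, fun i => (hd.comm _ _).trans_le (hC i)⟩
  trans := fun ⟨C, hC⟩ ⟨C', hC'⟩ =>
    ⟨C + C', fun i => (hd.triangle _ _ _).trans (add_le_add (hC i) (hC' i))⟩

variable {G G' : Type*} [Group G] [Group G'] {d : G → G → ℝ} {d' : G' → G' → ℝ} {f : G →* G'}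
  {M : MorseGauge}

theorem IsMorsePiece.congr {K : Set G} {p q : ℕ → G} {J : Set ℕ} (hp : IsMorsePiece d K M p J)
    (h0 : 0 ∈ J) (hpq : EqOn p q J) : IsMorsePiece d K M q J where
  zero := hpq h0 ▸ hp.zero
  mem j hj := hpq hj ▸ hp.mem j hj
  geodesic i hi j hj := hpq hi ▸ hpq hj ▸ hp.geodesic i hi j hj
  morse := image_congr hpq ▸ hp.morse

theorem isMorsePiece_map_iff (hf : ∀ x y, d' (f x) (f y) = d x y) (hinj : Function.Injective f)
    {γ : ℕ → G} {J : Set ℕ} :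
    IsMorsePiece d' f.range M (f ∘ γ) J ↔
      γ 0 = 1 ∧ IsGeodesicOnN d γ J ∧ IsMorseOnN d M γ J := by
  have hmorse : IsMorseIn d' f.range M (f ∘ γ '' J) ↔ IsMorseOnN d M γ J := by
    rw [isMorseOnN_iff_isMorseIn_univ, MonoidHom.coe_range, ← image_univ, image_comp]
    exact isMorseIn_image_iff hf (Function.leftInverse_invFun hinj)
  constructor
  · exact fun h => ⟨(map_eq_one_iff f hinj).1 h.zero,
      (IsGeodesicOnN.comp_isometry hf).1 h.geodesic, hmorse.1 h.morse⟩
  · exact fun ⟨h0, hgeod, hM⟩ => ⟨(map_eq_one_iff f hinj).2 h0, fun j _ => ⟨γ j, rfl⟩,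
      (IsGeodesicOnN.comp_isometry hf).2 hgeod, hmorse.2 hM⟩

theorem IsMorsePiece.exists_map (hf : ∀ x y, d' (f x) (f y) = d x y)
    (hinj : Function.Injective f) {q : ℕ → G'} {J : Set ℕ}
    (hq : IsMorsePiece d' f.range M q J) (h0 : 0 ∈ J) :
    ∃ γ, EqOn q (f ∘ γ) J ∧ γ 0 = 1 ∧ IsGeodesicOnN d γ J ∧ IsMorseOnN d M γ J := by
  have hγ : EqOn q (f ∘ Function.invFun f ∘ q) J := fun j hj =>
    (Function.invFun_eq (hq.mem j hj)).symm
  exact ⟨_, hγ, (isMorsePiece_map_iff hf hinj).1 (hq.congr h0 hγ)⟩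

theorem morsePtN_iff (hf : ∀ x y, d' (f x) (f y) = d x y) (hinj : Function.Injective f) {x : G} :
    MorsePtN d 1 M x ↔ ∃ n q, IsMorsePiece d' f.range M q (Iic n) ∧ q n = f x := by
  constructor
  · rintro ⟨n, γ, h0, rfl, hγ⟩
    exact ⟨n, f ∘ γ, (isMorsePiece_map_iff hf hinj).2 ⟨h0, hγ⟩, rfl⟩
  · rintro ⟨n, q, hq, hn⟩
    obtain ⟨γ, hqγ, h0, hγ⟩ := hq.exists_map hf hinj (Nat.zero_le n)
    exact ⟨n, γ, h0, hinj ((hqγ self_mem_Iic).symm.trans hn), hγ⟩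

/-- The path `ζ` is the image under `f` of a Morse ray in the class `z`. -/
def RealizesVia (f : G →* G') (z : MorseBoundaryN d 1) (ζ : ℕ → G') : Prop :=
  ∃ ξ : MRayN d 1, Quot.mk _ ξ = z ∧ ∀ s, ζ s = f (ξ.1 s)

theorem MorseDirN.exists_realizesVia {z : MorseBoundaryN d 1} (hz : MorseDirN d 1 M z)
    (hf : ∀ x y, d' (f x) (f y) = d x y) (hinj : Function.Injective f) :
    ∃ ζ, RealizesVia f z ζ ∧ IsMorsePiece d' f.range M ζ univ := by
  obtain ⟨ξ, hM, rfl⟩ := hz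
  exact ⟨f ∘ ξ.1, ⟨ξ, rfl, fun _ => rfl⟩,
    (isMorsePiece_map_iff hf hinj).2 ⟨ξ.2.1, ξ.2.2.1, hM⟩⟩

theorem IsMorsePiece.exists_realizesVia {ζ : ℕ → G'} (hζ : IsMorsePiece d' f.range M ζ univ)
    (hf : ∀ x y, d' (f x) (f y) = d x y) (hinj : Function.Injective f) :
    ∃ z : MorseBoundaryN d 1, RealizesVia f z ζ ∧ MorseDirN d 1 M z := by
  obtain ⟨γ, hζγ, h0, hgeod, hM⟩ := hζ.exists_map hf hinj trivial
  let ξ : MRayN d 1 := ⟨γ, h0, hgeod, M, hM⟩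
  exact ⟨Quot.mk _ ξ, ⟨ξ, rfl, fun s => hζγ trivial⟩, ξ, hM, rfl⟩

theorem RealizesVia.bounded_dist_iff_eq (hd : IsPseudoMetric d)
    (hf : ∀ x y, d' (f x) (f y) = d x y) {z z' : MorseBoundaryN d 1} {ζ ζ' : ℕ → G'}
    (hz : RealizesVia f z ζ) (hz' : RealizesVia f z' ζ') :
    (∃ C, ∀ s, d' (ζ s) (ζ' s) ≤ C) ↔ z = z' := by
  obtain ⟨ξ, rfl, hξ⟩ := hz
  obtain ⟨ξ', rfl, hξ'⟩ := hz'
  simp only [hξ, hξ', hf]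
  exact ((isEquivalence_bounded_dist hd 1).quot_mk_eq_iff ξ ξ').symm

end FactorPieces

section FreeProductFactors

variable (A B)

/-- The images of `A` and `B` in their free product. -/
def freeFactor : Bool → Subgroup (Coprod A B)
  | true => (Coprod.inl : A →* Coprod A B).range
  | false => (Coprod.inr : B →* Coprod A B).range

/-- The comparison map from the free product of the `Bool`-indexed family of factors. -/
def coprodIToCoprod : CoprodI (fun σ => freeFactor A B σ) →* Coprod A B :=
  CoprodI.lift fun σ => (freeFactor A B σ).subtype

/-- The inverse of `coprodIToCoprod`. -/
def coprodToCoprodI : Coprod A B →* CoprodI (fun σ => freeFactor A B σ) :=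
  Coprod.lift
    ((CoprodI.of (M := fun σ => freeFactor A B σ) (i := true)).comp
      (Coprod.inl : A →* Coprod A B).rangeRestrict)
    ((CoprodI.of (M := fun σ => freeFactor A B σ) (i := false)).comp
      (Coprod.inr : B →* Coprod A B).rangeRestrict)

theorem coprodIToCoprod_of (σ : Bool) (x : freeFactor A B σ) :
    coprodIToCoprod A B (CoprodI.of (M := fun σ => freeFactor A B σ) x) = x :=
  CoprodI.lift_of (M := fun σ => freeFactor A B σ) _ x

/-- The binary free product as the free product of the `Bool`-indexed family of its factors. -/
def coprodIFreeFactorEquiv : CoprodI (fun σ => freeFactor A B σ) ≃* Coprod A B :=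
  MonoidHom.toMulEquiv (coprodIToCoprod A B) (coprodToCoprodI A B)
    (by
      refine CoprodI.ext_hom _ _ fun σ => MonoidHom.ext fun x => ?_
      rw [MonoidHom.comp_apply, MonoidHom.comp_apply, coprodIToCoprod_of]
      cases σ <;> obtain ⟨_, x, rfl⟩ := x
      · exact Coprod.lift_apply_inr _ _ x
      · exact Coprod.lift_apply_inl _ _ x)
    (by
      refine Coprod.hom_ext (MonoidHom.ext fun x => ?_) (MonoidHom.ext fun x => ?_)
      · exact coprodIToCoprod_of A B true ⟨Coprod.inl x, x, rfl⟩
      · exact coprodIToCoprod_of A B false ⟨Coprod.inr x, x, rfl⟩)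

theorem exists_isFreeSplitting_freeFactor : ∃ ρ, IsFreeSplitting (freeFactor A B) ρ := by
  have hmap (σ : Bool) : (CoprodI.of (M := fun σ => freeFactor A B σ) (i := σ)).range.map
      (coprodIFreeFactorEquiv A B).toMonoidHom = freeFactor A B σ := by
    have hcomp : (coprodIFreeFactorEquiv A B).toMonoidHom.comp
        (CoprodI.of (M := fun σ => freeFactor A B σ)) = (freeFactor A B σ).subtype :=
      MonoidHom.ext fun x => coprodIToCoprod_of A B σ x
    rw [MonoidHom.map_range, hcomp, Subgroup.range_subtype]
  have hsplit := (isFreeSplitting_coprodI fun σ => freeFactor A B σ).map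
    (coprodIFreeFactorEquiv A B)
  rw [funext hmap] at hsplit
  exact ⟨_, hsplit⟩

variable {A B} {SA : Set A} {SB : Set B}

theorem closure_fpGens (hA : Subgroup.closure SA = ⊤) (hB : Subgroup.closure SB = ⊤) :
    Subgroup.closure (fpGens SA SB) = ⊤ := by
  rw [fpGens, Subgroup.closure_union]
  change Subgroup.closure (⇑Coprod.inl '' SA) ⊔ Subgroup.closure (⇑Coprod.inr '' SB) = ⊤
  rw [← MonoidHom.map_closure, ← MonoidHom.map_closure, hA, hB, ← MonoidHom.range_eq_map,
    ← MonoidHom.range_eq_map, Coprod.range_inl_sup_range_inr]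

theorem exists_isAdaptedSplitting_fpGens (hA : Subgroup.closure SA = ⊤)
    (hB : Subgroup.closure SB = ⊤) :
    ∃ ρ, IsAdaptedSplitting (freeFactor A B) ρ (fpGens SA SB) := by
  obtain ⟨ρ, hρ⟩ := exists_isFreeSplitting_freeFactor A B
  refine ⟨ρ, hρ, closure_fpGens hA hB, ?_⟩
  rintro _ (⟨a, -, rfl⟩ | ⟨b, -, rfl⟩)
  · exact ⟨true, a, rfl⟩
  · exact ⟨false, b, rfl⟩

theorem wordDist_inl (hA : Subgroup.closure SA = ⊤) (hB : Subgroup.closure SB = ⊤) (a a' : A) :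
    wordDist (fpGens SA SB) (Coprod.inl a) (Coprod.inl a') = wordDist SA a a' := by
  refine wordDist_map_of_leftInverse hA (closure_fpGens hA hB) Coprod.inl Coprod.fst
    (Coprod.fst_apply_inl (N := B)) (fun s hs => .inl ⟨s, hs, rfl⟩) ?_ a a'
  rintro _ (⟨s, hs, rfl⟩ | ⟨s, -, rfl⟩)
  · exact .inl (by rwa [Coprod.fst_apply_inl])
  · exact .inr (Coprod.fst_apply_inr s)

theorem wordDist_inr (hA : Subgroup.closure SA = ⊤) (hB : Subgroup.closure SB = ⊤) (b b' : B) :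
    wordDist (fpGens SA SB) (Coprod.inr b) (Coprod.inr b') = wordDist SB b b' := by
  refine wordDist_map_of_leftInverse hB (closure_fpGens hA hB) Coprod.inr Coprod.snd
    (Coprod.snd_apply_inr (M := A)) (fun s hs => .inr ⟨s, hs, rfl⟩) ?_ b b'
  rintro _ (⟨s, -, rfl⟩ | ⟨s, hs, rfl⟩)
  · exact .inr (Coprod.snd_apply_inl s)
  · exact .inl (by rwa [Coprod.snd_apply_inr])

theorem mem_freeFactor_iff {σ : Bool} {y : Coprod A B} :
    y ∈ freeFactor A B σ ↔ ∃ x : A ⊕ B, x.isLeft = σ ∧ sylElem x = y := by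
  cases σ <;> simp [freeFactor, sylElem]

theorem sylElem_inj_of_isLeft_eq {x x' : A ⊕ B} (h : x.isLeft = x'.isLeft)
    (hx : sylElem x = sylElem x') : x = x' := by
  rcases x with a | b <;> rcases x' with a' | b'
  · exact congrArg _ (Coprod.inl_injective hx)
  · cases h
  · cases h
  · exact congrArg _ (Coprod.inr_injective hx)

theorem sylElem_ne_one_iff {x : A ⊕ B} :
    sylElem x ≠ 1 ↔ x ≠ Sum.inl (1 : A) ∧ x ≠ Sum.inr (1 : B) := by
  rcases x with a | b
  · simpa [sylElem] using (map_eq_one_iff _ (Coprod.inl_injective (M := A) (N := B))).not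
  · simpa [sylElem] using (map_eq_one_iff _ (Coprod.inr_injective (M := A) (N := B))).not

theorem morsePtSum_iff (hA : Subgroup.closure SA = ⊤) (hB : Subgroup.closure SB = ⊤)
    {M : MorseGauge} {x : A ⊕ B} :
    MorsePtSum (wordDist SA) (wordDist SB) M x ↔ ∃ n q,
      IsMorsePiece (wordDist (fpGens SA SB)) (freeFactor A B x.isLeft) M q (Iic n) ∧
        q n = sylElem x := by
  rcases x with a | b
  · exact morsePtN_iff (wordDist_inl hA hB) Coprod.inl_injective
  · exact morsePtN_iff (wordDist_inr hA hB) Coprod.inr_injective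

/-- The path `ζ` in the free product is the image of a Morse ray of one of the factors in the
class `z`. -/
def RealizesDir {SA : Set A} {SB : Set B} :
    MorseBoundaryN (wordDist SA) 1 ⊕ MorseBoundaryN (wordDist SB) 1 → (ℕ → Coprod A B) → Prop
  | Sum.inl z, ζ => RealizesVia Coprod.inl z ζ
  | Sum.inr z, ζ => RealizesVia Coprod.inr z ζ

theorem exists_realizesDir (hA : Subgroup.closure SA = ⊤) (hB : Subgroup.closure SB = ⊤)
    {M : MorseGauge} {z : MorseBoundaryN (wordDist SA) 1 ⊕ MorseBoundaryN (wordDist SB) 1}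
    (hz : MorseDirSum (wordDist SA) (wordDist SB) M z) :
    ∃ ζ, RealizesDir z ζ ∧
      IsMorsePiece (wordDist (fpGens SA SB)) (freeFactor A B z.isLeft) M ζ univ := by
  rcases z with z | z
  · exact hz.exists_realizesVia (wordDist_inl hA hB) Coprod.inl_injective
  · exact hz.exists_realizesVia (wordDist_inr hA hB) Coprod.inr_injective

theorem IsMorsePiece.exists_realizesDir (hA : Subgroup.closure SA = ⊤)
    (hB : Subgroup.closure SB = ⊤) {M : MorseGauge} {σ : Bool} {ζ : ℕ → Coprod A B}
    (hζ : IsMorsePiece (wordDist (fpGens SA SB)) (freeFactor A B σ) M ζ univ) :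
    ∃ z : MorseBoundaryN (wordDist SA) 1 ⊕ MorseBoundaryN (wordDist SB) 1,
      z.isLeft = σ ∧ RealizesDir z ζ ∧ MorseDirSum (wordDist SA) (wordDist SB) M z := by
  cases σ
  · obtain ⟨z, hz⟩ := hζ.exists_realizesVia (wordDist_inr hA hB) Coprod.inr_injective
    exact ⟨Sum.inr z, rfl, hz⟩
  · obtain ⟨z, hz⟩ := hζ.exists_realizesVia (wordDist_inl hA hB) Coprod.inl_injective
    exact ⟨Sum.inl z, rfl, hz⟩

theorem RealizesDir.bounded_dist_iff_eq (hA : Subgroup.closure SA = ⊤)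
    (hB : Subgroup.closure SB = ⊤)
    {z z' : MorseBoundaryN (wordDist SA) 1 ⊕ MorseBoundaryN (wordDist SB) 1}
    {ζ ζ' : ℕ → Coprod A B} (hz : RealizesDir z ζ) (hz' : RealizesDir z' ζ')
    (hzz' : z.isLeft = z'.isLeft) :
    (∃ C, ∀ s, wordDist (fpGens SA SB) (ζ s) (ζ' s) ≤ C) ↔ z = z' := by
  rcases z with z | z <;> rcases z' with z' | z'
  · rw [Sum.inl.injEq]
    exact RealizesVia.bounded_dist_iff_eq (isPseudoMetric_wordDist hA) (wordDist_inl hA hB) hz hz'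
  · cases hzz'
  · cases hzz'
  · rw [Sum.inr.injEq]
    exact RealizesVia.bounded_dist_iff_eq (isPseudoMetric_wordDist hB) (wordDist_inr hA hB) hz hz'

end FreeProductFactors

section ReducedSequences

theorem forall_eq_factorIdx_iff {b : ℕ → Bool} {N : ℕ∞} :
    (∀ i : ℕ, i < N → b i = factorIdx i) ↔
      (0 < N → b 0 = true) ∧ ∀ i : ℕ, (i + 1 : ℕ) < N → b i ≠ b (i + 1) := by
  constructor
  · refine fun h => ⟨h 0, fun i hi => ?_⟩
    rw [h i ((Nat.cast_lt.2 i.lt_succ_self).trans hi), h _ hi]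
    exact (Bool.not_ne_self _).symm
  · rintro ⟨h0, hne⟩ i hi
    induction i with
    | zero => exact h0 hi
    | succ i ih =>
      rw [factorIdx, ← ih ((Nat.cast_lt.2 i.lt_succ_self).trans hi)]
      exact Bool.eq_not_of_ne (hne i hi).symm

theorem factorIdx_eq_true_iff_even {n : ℕ} : factorIdx n = true ↔ Even n := by
  induction n with
  | zero => simp [factorIdx]
  | succ n ih => rw [factorIdx, Nat.even_add_one, ← ih, Bool.not_eq_true', Bool.not_eq_true]

/-- The first `N` terms of `u` satisfy the conditions `SylSeqOK` and `SylListOK` of a combinatorial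
geodesic, for `N = ∞` and for finite `N` respectively. -/
structure IsReducedSeq (u : ℕ → A ⊕ B) (N : ℕ∞) : Prop where
  isLeft : ∀ i : ℕ, i < N → (u i).isLeft = factorIdx i
  ne_one : ∀ i : ℕ, 1 ≤ i → i < N → u i ≠ Sum.inl 1 ∧ u i ≠ Sum.inr 1

theorem isReducedSeq_iff {u : ℕ → A ⊕ B} {N : ℕ∞} :
    IsReducedSeq u N ↔ (∀ i : ℕ, i < N → (u i).isLeft = factorIdx i) ∧
      ∀ i : ℕ, 1 ≤ i → i < N → u i ≠ Sum.inl 1 ∧ u i ≠ Sum.inr 1 :=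
  ⟨fun h => ⟨h.isLeft, h.ne_one⟩, fun h => ⟨h.1, h.2⟩⟩

variable {u : ℕ → A ⊕ B} {N : ℕ∞} {g : ℕ → Coprod A B} {l : List (A ⊕ B)}

theorem sylSeqOK_iff : SylSeqOK u ↔ IsReducedSeq u ⊤ := by
  rw [isReducedSeq_iff, forall_eq_factorIdx_iff (b := fun i => (u i).isLeft)]
  simp only [SylSeqOK, ENat.natCast_lt_top, ENat.top_pos, true_imp_iff, and_assoc]

theorem sylListOK_iff (hu : ∀ i (hi : i < l.length), l[i] = u i) :
    SylListOK l ↔ IsReducedSeq u l.length := by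
  rw [isReducedSeq_iff, forall_eq_factorIdx_iff (b := fun i => (u i).isLeft), SylListOK, and_assoc]
  refine and_congr ?_ (and_congr ?_ ?_)
  · cases l with
    | nil => simp
    | cons x l => simp [← hu 0]
  · simp only [Nat.cast_lt]
    refine List.isChain_iff_getElem.trans (forall₂_congr fun i hi => ?_)
    rw [hu, hu]
  · simp only [Nat.cast_lt, List.forall_mem_iff_getElem, List.getElem_tail, hu, List.length_tail]
    constructor
    · intro h i hi hil
      obtain ⟨j, rfl⟩ := Nat.exists_eq_add_of_le' hi
      exact h j (Nat.lt_sub_of_add_lt hil)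
    · exact fun h i hi => h (i + 1) (Nat.le_add_left 1 i) (Nat.add_lt_of_lt_sub hi)

theorem IsReducedSeq.isSyllableSeq (hu : IsReducedSeq u N) :
    IsSyllableSeq (freeFactor A B) (sylElem ∘ u) N where
  mem i hi := mem_freeFactor_iff.2 ⟨u i, hu.isLeft i hi, rfl⟩
  ne_one i hi hiN := sylElem_ne_one_iff.2 (hu.ne_one i hi hiN)

theorem IsSyllableSeq.exists_isReducedSeq (hg : IsSyllableSeq (freeFactor A B) g N) :
    ∃ u : ℕ → A ⊕ B, IsReducedSeq u N ∧ ∀ i : ℕ, i < N → sylElem (u i) = g i := by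
  have hex (i : ℕ) (hi : i < N) : ∃ x : A ⊕ B, x.isLeft = factorIdx i ∧ sylElem x = g i :=
    mem_freeFactor_iff.1 (hg.mem i hi)
  choose! u hleft hu using hex
  exact ⟨u, ⟨hleft, fun i hi hiN => sylElem_ne_one_iff.1 (hu i hiN ▸ hg.ne_one i hi hiN)⟩, hu⟩

theorem sylProdL_eq_prefixProd (hu : ∀ i (hi : i < l.length), l[i] = u i) {i : ℕ}
    (hi : i ≤ l.length) : sylProdL l i = prefixProd (sylElem ∘ u) i := by
  rw [sylProdL, prefixProd, ← List.map_map]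
  congr 2
  refine List.ext_getElem (by simpa using hi) fun j _ _ => ?_
  simp [hu]

theorem mem_syllableCoset_freeFactor_iff {k : ℕ} {x : Coprod A B} :
    x ∈ syllableCoset (freeFactor A B) g k ↔
      ∃ y : A ⊕ B, y.isLeft = factorIdx k ∧ x = prefixProd g k * sylElem y := by
  simp only [mem_syllableCoset, mem_freeFactor_iff, eq_inv_mul_iff_mul_eq, eq_comm]

end ReducedSequences

section CombinatorialGeodesics

namespace CombBoundary

variable {dA : A → A → ℝ} {dB : B → B → ℝ}

/-- The number of syllables of a combinatorial Morse geodesic. -/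
def length : CombBoundary dA dB → ℕ∞
  | Sum.inl _ => ⊤
  | Sum.inr c => c.l.length

/-- The syllables of a combinatorial Morse geodesic; the value is junk from the index
`length` on. -/
def syllable : CombBoundary dA dB → ℕ → A ⊕ B
  | Sum.inl c => c.u
  | Sum.inr c => fun i => c.l.getD i (Sum.inl 1)

/-- The combinatorial Morse geodesic has `n` syllables, followed by the Morse direction `z`. -/
def EndsAt : CombBoundary dA dB → ℕ → MorseBoundaryN dA (1 : A) ⊕ MorseBoundaryN dB (1 : B) → Prop
  | Sum.inl _, _, _ => False
  | Sum.inr c, n, z => c.l.length = n ∧ c.z = z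

/-- Every syllable is an `M`-Morse point, and so is the final direction if there is one. -/
def IsMorse (a : CombBoundary dA dB) (M : MorseGauge) : Prop :=
  (∀ i : ℕ, i < a.length → MorsePtSum dA dB M (a.syllable i)) ∧
    ∀ n z, a.EndsAt n z → MorseDirSum dA dB M z

variable {a a' : CombBoundary dA dB} {n : ℕ}
  {z : MorseBoundaryN dA (1 : A) ⊕ MorseBoundaryN dB (1 : B)}

theorem getElem_eq_syllable (c : CombFin dA dB) (i : ℕ) (hi : i < c.l.length) :
    c.l[i] = syllable (Sum.inr c) i :=
  (List.getD_eq_getElem _ _ hi).symm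

theorem length_eq_natCast_iff : a.length = n ↔ ∃ z, a.EndsAt n z := by
  rcases a with c | c
  · exact ⟨fun h => absurd h.symm (ENat.natCast_ne_top n), fun ⟨_, h⟩ => h.elim⟩
  · exact ⟨fun h => ⟨c.z, ENat.natCast_inj.1 h, rfl⟩, fun ⟨_, h, _⟩ => congrArg _ h⟩

theorem isReducedSeq_syllable (a : CombBoundary dA dB) : IsReducedSeq a.syllable a.length := by
  rcases a with c | c
  · exact sylSeqOK_iff.1 c.ok
  · exact (sylListOK_iff (getElem_eq_syllable c)).1 c.ok

theorem EndsAt.isLeft_eq (h : a.EndsAt n z) : z.isLeft = factorIdx n := by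
  rcases a with c | c
  · exact h.elim
  · obtain ⟨rfl, rfl⟩ := h
    exact Bool.eq_iff_iff.2 (c.parity.symm.trans factorIdx_eq_true_iff_even.symm)

theorem EndsAt.unique {z' : MorseBoundaryN dA (1 : A) ⊕ MorseBoundaryN dB (1 : B)}
    (h : a.EndsAt n z) (h' : a.EndsAt n z') : z = z' := by
  rcases a with c | c
  · exact h.elim
  · exact h.2.symm.trans h'.2

theorem exists_isMorse (a : CombBoundary dA dB) : ∃ M, a.IsMorse M := by
  rcases a with c | c
  · exact c.morse.imp fun M hM => ⟨fun i _ => hM i, fun _ _ h => h.elim⟩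
  · refine c.morse.imp fun M hM => ⟨fun i hi => ?_, fun n z h => h.2 ▸ hM.2⟩
    rw [← getElem_eq_syllable c i (Nat.cast_lt.1 hi)]
    exact hM.1 _ (List.getElem_mem _)

theorem ext_of_syllable (hlen : a.length = a'.length)
    (hsyl : ∀ i : ℕ, i < a.length → a.syllable i = a'.syllable i)
    (hend : ∀ n z z', a.EndsAt n z → a'.EndsAt n z' → z = z') : a = a' := by
  rcases a with c | c <;> rcases a' with c' | c'
  · obtain ⟨u, _, _⟩ := c
    obtain ⟨u', _, _⟩ := c'
    obtain rfl : u = u' := funext fun i => hsyl i (ENat.natCast_lt_top i)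
    rfl
  · exact absurd hlen.symm (ENat.natCast_ne_top _)
  · exact absurd hlen (ENat.natCast_ne_top _)
  · have hlen' : c.l.length = c'.l.length := ENat.natCast_inj.1 hlen
    have hl : c.l = c'.l := List.ext_getElem hlen' fun i hi hi' => by
      rw [getElem_eq_syllable, getElem_eq_syllable]
      exact hsyl i (Nat.cast_lt.2 hi)
    have hz : c.z = c'.z := hend _ _ _ ⟨rfl, rfl⟩ ⟨hlen'.symm, rfl⟩
    obtain ⟨l, z, _, _, _⟩ := c
    obtain ⟨l', z', _, _, _⟩ := c'
    obtain rfl : l = l' := hl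
    obtain rfl : z = z' := hz
    rfl

theorem exists_of_isReducedSeq {u : ℕ → A ⊕ B} {N : ℕ∞} {M : MorseGauge} (hu : IsReducedSeq u N)
    (hM : ∀ i : ℕ, i < N → MorsePtSum dA dB M (u i))
    {z : ∀ n : ℕ, N = n → MorseBoundaryN dA (1 : A) ⊕ MorseBoundaryN dB (1 : B)}
    (hz : ∀ n hn, (z n hn).isLeft = factorIdx n ∧ MorseDirSum dA dB M (z n hn)) :
    ∃ a : CombBoundary dA dB, a.length = N ∧ (∀ i : ℕ, i < N → a.syllable i = u i) ∧
      ∀ n hn, a.EndsAt n (z n hn) := by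
  induction N using ENat.recTopCoe with
  | top =>
    exact ⟨Sum.inl ⟨u, sylSeqOK_iff.2 hu, M, fun i => hM i (ENat.natCast_lt_top i)⟩, rfl,
      fun i _ => rfl, fun n hn => absurd hn.symm (ENat.natCast_ne_top n)⟩
  | coe n =>
    set l := (List.range n).map u with hl
    have hlen : l.length = n := by rw [hl, List.length_map, List.length_range]
    have hget (i : ℕ) (hi : i < l.length) : l[i] = u i := by
      simp only [hl, List.getElem_map, List.getElem_range]
    have hMl : ∀ x ∈ l, MorsePtSum dA dB M x := List.forall_mem_map.2 fun i hi =>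
      hM i (Nat.cast_lt.2 (List.mem_range.1 hi))
    have hparity : Even l.length ↔ (z n rfl).isLeft = true := by
      rw [hlen, (hz n rfl).1, factorIdx_eq_true_iff_even]
    let c : CombFin dA dB :=
      ⟨l, z n rfl, (sylListOK_iff hget).2 (hlen.symm ▸ hu), hparity, M, hMl, (hz n rfl).2⟩
    refine ⟨Sum.inr c, congrArg _ hlen, fun i hi => ?_, fun m hm => ?_⟩
    · have hi' : i < l.length := hlen.symm ▸ Nat.cast_lt.1 hi
      exact (getElem_eq_syllable c i hi').symm.trans (hget i hi')
    · obtain rfl := ENat.natCast_inj.1 hm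
      exact ⟨hlen, rfl⟩

end CombBoundary

end CombinatorialGeodesics

section Representatives

variable {SA : Set A} {SB : Set B}
  {η : MRayN (wordDist (fpGens SA SB)) (1 : Coprod A B)}

theorem isItinerary_freeFactor_iff {g γ : ℕ → Coprod A B} {N : ℕ∞} {t : ℕ → ℕ} :
    IsItinerary (freeFactor A B) g N t γ ↔
      t 0 = 0 ∧ Monotone t ∧ (∀ i : ℕ, i ≤ N → γ (t i) = prefixProd g i) ∧
        ∀ k : ℕ, k ≤ N → ∀ s, t k ≤ s → (k < N → s ≤ t (k + 1)) →
          ∃ x : A ⊕ B, x.isLeft = factorIdx k ∧ γ s = prefixProd g k * sylElem x := by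
  simp only [← mem_syllableCoset_freeFactor_iff]
  exact ⟨fun h => ⟨h.zero, h.mono, h.apply_time,
      fun k hk s hks hsk => h.mem_coset k hk s ⟨hks, hsk⟩⟩,
    fun ⟨h0, hmono, htime, hcoset⟩ => ⟨h0, hmono, htime, fun k hk s hs => hcoset k hk s hs.1 hs.2⟩⟩

theorem repInf_iff {c : CombInf (wordDist SA) (wordDist SB)} :
    RepInf SA SB c η ↔ ∃ t, IsItinerary (freeFactor A B) (sylElem ∘ c.u) ⊤ t η.1 := by
  refine exists_congr fun t => ?_
  simp only [isItinerary_freeFactor_iff, le_top, ENat.natCast_lt_top, true_imp_iff,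
    ← (sylSeqOK_iff.1 c.ok).isLeft _ (ENat.natCast_lt_top _)]
  rfl

theorem RealizesDir.mem_freeFactor
    {z : MorseBoundaryN (wordDist SA) (1 : A) ⊕ MorseBoundaryN (wordDist SB) (1 : B)}
    {ζ : ℕ → Coprod A B} (hz : RealizesDir z ζ) (s : ℕ) : ζ s ∈ freeFactor A B z.isLeft := by
  rcases z with z | z
  all_goals
    obtain ⟨ξ, -, hξ⟩ := hz
    exact ⟨ξ.1 s, (hξ s).symm⟩

theorem repFin_iff_realizesDir {c : CombFin (wordDist SA) (wordDist SB)} :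
    RepFin SA SB c η ↔ ∃ t : ℕ → ℕ, t 0 = 0 ∧ Monotone t ∧
      (∀ i ≤ c.l.length, η.1 (t i) = sylProdL c.l i) ∧
      (∀ (i : ℕ) (hi : i < c.l.length), ∀ s, t i ≤ s → s ≤ t (i + 1) →
        ∃ x : A ⊕ B, x.isLeft = c.l[i].isLeft ∧ η.1 s = sylProdL c.l i * sylElem x) ∧
      RealizesDir c.z fun s => (sylProdL c.l c.l.length)⁻¹ * η.1 (t c.l.length + s) := by
  obtain ⟨l, z, _, _, _⟩ := c
  rcases z with z | z
  all_goals
    simp only [RepFin, RealizesDir, RealizesVia, inv_mul_eq_iff_eq_mul]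
    rfl

theorem repFin_iff {c : CombFin (wordDist SA) (wordDist SB)} {u : ℕ → A ⊕ B}
    (hu : ∀ i (hi : i < c.l.length), c.l[i] = u i) :
    RepFin SA SB c η ↔ ∃ t, IsItinerary (freeFactor A B) (sylElem ∘ u) c.l.length t η.1 ∧
      RealizesDir c.z fun s =>
        (prefixProd (sylElem ∘ u) c.l.length)⁻¹ * η.1 (t c.l.length + s) := by
  have hprod {i : ℕ} (hi : i ≤ c.l.length) : sylProdL c.l i = prefixProd (sylElem ∘ u) i :=
    sylProdL_eq_prefixProd hu hi
  have hleft (i : ℕ) (hi : i < c.l.length) : c.l[i].isLeft = factorIdx i := by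
    rw [hu i hi]
    exact ((sylListOK_iff hu).1 c.ok).isLeft i (Nat.cast_lt.2 hi)
  have hzleft : c.z.isLeft = factorIdx c.l.length :=
    CombBoundary.EndsAt.isLeft_eq (a := Sum.inr c) ⟨rfl, rfl⟩
  simp only [repFin_iff_realizesDir, isItinerary_freeFactor_iff, Nat.cast_le, Nat.cast_lt,
    hprod le_rfl]
  refine exists_congr fun t => ?_
  constructor
  · rintro ⟨h0, hmono, htime, hcoset, hdir⟩
    refine ⟨⟨h0, hmono, fun i hi => hprod hi ▸ htime i hi, fun k hk s hks hsk => ?_⟩, hdir⟩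
    obtain hlt | rfl := hk.lt_or_eq
    · obtain ⟨x, hx, hs⟩ := hcoset k hlt s hks (hsk hlt)
      exact ⟨x, hx.trans (hleft k hlt), hprod hk ▸ hs⟩
    · rw [← mem_syllableCoset_freeFactor_iff, mem_syllableCoset, ← hzleft,
        ← Nat.add_sub_cancel' hks]
      exact hdir.mem_freeFactor _
  · rintro ⟨⟨h0, hmono, htime, hcoset⟩, hdir⟩
    refine ⟨h0, hmono, fun i hi => (htime i hi).trans (hprod hi).symm, fun i hi s his hsi => ?_,
      hdir⟩
    rw [hleft i hi, hprod hi.le]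
    exact hcoset i hi.le s his fun _ => hsi

theorem represents_iff {a : CombBoundary (wordDist SA) (wordDist SB)} :
    Represents SA SB a η ↔
      ∃ t, IsItinerary (freeFactor A B) (sylElem ∘ a.syllable) a.length t η.1 ∧
        ∀ n z, a.EndsAt n z →
          RealizesDir z fun s => (prefixProd (sylElem ∘ a.syllable) n)⁻¹ * η.1 (t n + s) := by
  rcases a with c | c
  · exact repInf_iff.trans (exists_congr fun t => ⟨fun h => ⟨h, fun _ _ => False.elim⟩, And.left⟩)
  · refine (repFin_iff (CombBoundary.getElem_eq_syllable c)).trans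
      (exists_congr fun t => and_congr_right fun _ => ⟨?_, fun h => h _ _ ⟨rfl, rfl⟩⟩)
    rintro hdir _ _ ⟨rfl, rfl⟩
    exact hdir

end Representatives

section Bijectivity

variable {SA : Set A} {SB : Set B}
  {a a' : CombBoundary (wordDist SA) (wordDist SB)}
  {η η' : MRayN (wordDist (fpGens SA SB)) (1 : Coprod A B)}

theorem exists_represents (hA : Subgroup.closure SA = ⊤) (hB : Subgroup.closure SB = ⊤)
    (a : CombBoundary (wordDist SA) (wordDist SB)) : ∃ η, Represents SA SB a η := by
  obtain ⟨ρ, h⟩ := exists_isAdaptedSplitting_fpGens hA hB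
  obtain ⟨M, hMsyl, hMend⟩ := a.exists_isMorse
  have hred := a.isReducedSeq_syllable
  have hseg (k : ℕ) (hk : k < a.length) : ∃ n q,
      IsMorsePiece (wordDist (fpGens SA SB)) (freeFactor A B (factorIdx k)) M q (Iic n) ∧
        q n = sylElem (a.syllable k) :=
    hred.isLeft k hk ▸ (morsePtSum_iff hA hB).1 (hMsyl k hk)
  have hray (n : ℕ) (hn : a.length = n) : ∃ ζ, (∀ z, a.EndsAt n z → RealizesDir z ζ) ∧
      IsMorsePiece (wordDist (fpGens SA SB)) (freeFactor A B (factorIdx n)) M ζ univ := by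
    obtain ⟨z, hz⟩ := CombBoundary.length_eq_natCast_iff.1 hn
    obtain ⟨ζ, hζ, hζM⟩ := exists_realizesDir hA hB (hMend n z hz)
    exact ⟨ζ, fun z' hz' => hz.unique hz' ▸ hζ, hz.isLeft_eq ▸ hζM⟩
  choose! ζ hζ hζM using hray
  obtain ⟨ℓ, p, hp, hpζ⟩ := IsPieceSeq.exists_of_segments hseg hζM
  have hg := hred.isSyllableSeq
  obtain ⟨γ, hγ⟩ := hp.exists_isConcat hg
  have hI := hp.isItinerary hg hγ
  have hMγ : IsMorseOnN (wordDist (fpGens SA SB)) (concatGauge M) γ univ := by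
    rw [isMorseOnN_iff_isMorseIn_univ, image_univ]
    exact hp.isMorseIn_range h hg hγ
  refine ⟨⟨γ, hI.apply_zero, hp.isGeodesicOnN h hg hγ, _, hMγ⟩,
    represents_iff.2 ⟨arrivalTime ℓ, hI, fun n z hz => ?_⟩⟩
  have hn := CombBoundary.length_eq_natCast_iff.2 ⟨z, hz⟩
  convert hζ n hn z hz using 2 with s
  rw [inv_mul_eq_iff_eq_mul, ← hpζ n hn]
  exact hγ n hn.ge s (by rw [hn, pieceTimes_natCast]; trivial)

theorem exists_combBoundary_represents (hA : Subgroup.closure SA = ⊤)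
    (hB : Subgroup.closure SB = ⊤) (η : MRayN (wordDist (fpGens SA SB)) (1 : Coprod A B)) :
    ∃ a, Represents SA SB a η := by
  obtain ⟨h0, hγ, M, hM⟩ := η.2
  obtain ⟨ρ, h⟩ := exists_isAdaptedSplitting_fpGens hA hB
  obtain ⟨g, N, t, hg, hI⟩ := exists_isItinerary h h0 hγ
  obtain ⟨u, hu, hug⟩ := hg.exists_isReducedSeq
  rw [isMorseOnN_iff_isMorseIn_univ, image_univ] at hM
  have hp := hI.isPieceSeq hg h hγ hM
  have hMu (i : ℕ) (hi : i < N) : MorsePtSum (wordDist SA) (wordDist SB) M (u i) := by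
    have hpiece := hp.piece i hi.le
    rw [pieceTimes_of_lt hi, ← hu.isLeft i hi] at hpiece
    exact (morsePtSum_iff hA hB).2 ⟨_, _, hpiece, (hp.last i hi).trans (hug i hi).symm⟩
  have hdir (n : ℕ) (hn : N = n) :
      ∃ z : MorseBoundaryN (wordDist SA) (1 : A) ⊕ MorseBoundaryN (wordDist SB) (1 : B),
        z.isLeft = factorIdx n ∧ RealizesDir z (fun s => (prefixProd g n)⁻¹ * η.1 (t n + s)) ∧
          MorseDirSum (wordDist SA) (wordDist SB) M z := by
    have hpiece := hp.piece n hn.ge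
    rw [hn, pieceTimes_natCast] at hpiece
    exact hpiece.exists_realizesDir hA hB
  choose z hzleft hz hzM using hdir
  obtain ⟨a, rfl, hsyl, hend⟩ :=
    CombBoundary.exists_of_isReducedSeq hu hMu fun n hn => ⟨hzleft n hn, hzM n hn⟩
  have hgsyl (i : ℕ) (hi : i < a.length) : g i = (sylElem ∘ a.syllable) i := by
    rw [Function.comp_apply, hsyl i hi, hug i hi]
  refine ⟨a, represents_iff.2 ⟨t, hI.congr hgsyl, fun n z' hz' => ?_⟩⟩
  have hn := CombBoundary.length_eq_natCast_iff.2 ⟨z', hz'⟩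
  rw [hz'.unique (hend n hn), ← prefixProd_congr hn.ge hgsyl]
  exact hz n hn

theorem bounded_dist_of_bounded_dist_add {X : Type*} {d : X → X → ℝ} {γ γ' : ℕ → X} {m : ℕ}
    (h : ∃ C, ∀ s, d (γ (m + s)) (γ' (m + s)) ≤ C) : ∃ C, ∀ s, d (γ s) (γ' s) ≤ C := by
  obtain ⟨C, hC⟩ := h
  have hbdd : Filter.IsBoundedUnder (· ≤ ·) Filter.atTop fun s => d (γ s) (γ' s) :=
    Filter.isBoundedUnder_of_eventually_le (a := C) <| Filter.eventually_atTop.2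
      ⟨m, fun s hs => Nat.add_sub_cancel' hs ▸ hC (s - m)⟩
  exact hbdd.bddAbove_range.imp fun _ => forall_mem_range.1

theorem Represents.bounded_dist (hA : Subgroup.closure SA = ⊤) (hB : Subgroup.closure SB = ⊤)
    (hη : Represents SA SB a η) (hη' : Represents SA SB a η') :
    ∃ C, ∀ s, wordDist (fpGens SA SB) (η.1 s) (η'.1 s) ≤ C := by
  obtain ⟨h0, hγ, M, hM⟩ := η.2
  obtain ⟨h0', hγ', -⟩ := η'.2
  obtain ⟨t, hI, hend⟩ := represents_iff.1 hη
  obtain ⟨t', hI', hend'⟩ := represents_iff.1 hη'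
  have htime {k : ℕ} (hk : k ≤ a.length) : t k = t' k := hI.time_eq hI' hγ hγ' hk hk rfl
  obtain hlen | ⟨n, hn⟩ := eq_or_ne a.length ⊤ |>.imp_right ENat.ne_top_iff_exists.1
  · rw [isMorseOnN_iff_isMorseIn_univ, image_univ] at hM
    have hd := isPseudoMetric_wordDist (closure_fpGens hA hB)
    refine ⟨2 * M 1 0, hM.dist_le_of_frequently_eq hd hγ hγ' (h0.trans h0'.symm) fun s => ?_⟩
    have hk {k : ℕ} : (k : ℕ∞) ≤ a.length := hlen ▸ le_top
    have hle := (hI.isTimetable a.isReducedSeq_syllable.isSyllableSeq).le_add_one (hk (k := s + 1))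
    refine ⟨t (s + 1), Nat.succ_le_succ_iff.1 hle, ?_⟩
    rw [hI.apply_time _ hk, htime hk, hI'.apply_time _ hk]
  · obtain ⟨z, hz⟩ := CombBoundary.length_eq_natCast_iff.1 hn.symm
    have hdist := ((hend n z hz).bounded_dist_iff_eq hA hB (hend' n z hz) rfl).2 rfl
    simp only [wordDist_mul_left, ← htime hn.le] at hdist
    exact bounded_dist_of_bounded_dist_add hdist

theorem Represents.eq_of_bounded_dist (hA : Subgroup.closure SA = ⊤) (hB : Subgroup.closure SB = ⊤)
    (hη : Represents SA SB a η) (hη' : Represents SA SB a' η') {C : ℝ}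
    (hC : ∀ s, wordDist (fpGens SA SB) (η.1 s) (η'.1 s) ≤ C) : a = a' := by
  have hγ : IsGeodesicOnN (wordDist (fpGens SA SB)) η.1 univ := η.2.2.1
  have hγ' : IsGeodesicOnN (wordDist (fpGens SA SB)) η'.1 univ := η'.2.2.1
  obtain ⟨ρ, h⟩ := exists_isAdaptedSplitting_fpGens hA hB
  obtain ⟨t, hI, hend⟩ := represents_iff.1 hη
  obtain ⟨t', hI', hend'⟩ := represents_iff.1 hη'
  have hg := a.isReducedSeq_syllable.isSyllableSeq
  have hg' := a'.isReducedSeq_syllable.isSyllableSeq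
  have hlen : a.length = a'.length := hI.length_eq hI' hg hg' h hγ hγ' hC
  refine CombBoundary.ext_of_syllable hlen (fun k hk => ?_) fun n z z' hz hz' => ?_
  · refine sylElem_inj_of_isLeft_eq ?_ (hI.syllable_eq hI' hg hg' h hγ hγ' hC hk)
    rw [a.isReducedSeq_syllable.isLeft k hk, a'.isReducedSeq_syllable.isLeft k (hlen ▸ hk)]
  · have hn : (n : ℕ∞) ≤ a.length := (CombBoundary.length_eq_natCast_iff.2 ⟨z, hz⟩).ge
    obtain ⟨hn', hprod⟩ := hI.le_and_prefixProd_eq hI' hg hg' h hγ hγ' hC hn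
    refine ((hend n z hz).bounded_dist_iff_eq hA hB (hend' n z' hz')
      (hz.isLeft_eq.trans hz'.isLeft_eq.symm)).1 ⟨C, fun s => ?_⟩
    rw [hprod, wordDist_mul_left, hI.time_eq hI' hγ hγ' hn hn' hprod]
    exact hC _

end Bijectivity

theorem stmt16_general (A B : Type*) [Group A] [Group B] (SA : Set A) (SB : Set B)
    (hSAgen : Subgroup.closure SA = ⊤) (hSBgen : Subgroup.closure SB = ⊤) :
    ∃ Φ : CombBoundary (wordDist SA) (wordDist SB) ≃
        MorseBoundaryN (wordDist (fpGens SA SB)) (1 : Monoid.Coprod A B),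
      (∀ a, ∃ η, Represents SA SB a η) ∧
      (∀ a η, Represents SA SB a η → Φ a = Quot.mk _ η) := by
  have hequiv := isEquivalence_bounded_dist
    (isPseudoMetric_wordDist (closure_fpGens hSAgen hSBgen)) (1 : Coprod A B)
  choose ray hray using exists_represents hSAgen hSBgen
  let Φ : CombBoundary (wordDist SA) (wordDist SB) →
      MorseBoundaryN (wordDist (fpGens SA SB)) (1 : Monoid.Coprod A B) := fun a => Quot.mk _ (ray a)
  have hΦ (a η) (hη : Represents SA SB a η) : Φ a = Quot.mk _ η :=
    Quot.sound ((hray a).bounded_dist hSAgen hSBgen hη)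
  have hinj : Function.Injective Φ := fun a a' haa' =>
    have ⟨_, hC⟩ := (hequiv.quot_mk_eq_iff _ _).1 haa'
    (hray a).eq_of_bounded_dist hSAgen hSBgen (hray a') hC
  have hsurj : Function.Surjective Φ := Quot.ind fun η =>
    have ⟨a, ha⟩ := exists_combBoundary_represents hSAgen hSBgen η
    ⟨a, hΦ a η ha⟩
  exact ⟨.ofBijective Φ ⟨hinj, hsurj⟩, fun a => ⟨ray a, hray a⟩, hΦ⟩

/-- the map `Φ` from the combinatorial Morse boundary of `A ∗ B` to the
Morse boundary of `A ∗ B`, sending a combinatorial Morse geodesic to the class of the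
concatenated geodesic ray, is a (well-defined) bijection. -/
theorem stmt16 (A B : Type) [Group A] [Group B] (SA : Set A) (SB : Set B)
    (hSAfin : SA.Finite) (hSBfin : SB.Finite)
    (hSAgen : Subgroup.closure SA = ⊤) (hSBgen : Subgroup.closure SB = ⊤) :
    ∃ Φ : CombBoundary (wordDist SA) (wordDist SB) ≃
        MorseBoundaryN (wordDist (fpGens SA SB)) (1 : Monoid.Coprod A B),
      (∀ a, ∃ η, Represents SA SB a η) ∧
      (∀ a η, Represents SA SB a η → Φ a = Quot.mk _ η) :=
  stmt16_general A B SA SB hSAgen hSBgen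

end Statement16
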